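/- arXiv:1908.09420 — 11 statements merged into one kernel-verified Lean document; each statement's English description precedes it below -/
import Mathlib

section
/- Let N be an odd perfect number and let p_1 < p_2 < ... < p_k be its distinct prime divisors. Then for every integer i with 0 ≤ i ≤ k-1, the (i+1)-th largest prime divisor satisfies p_{k-i} < (2N)^(1/(2i+2)), i.e., (p_{k-i})^(2i+2) < 2N. -/
open ArithmeticFunction

theorem succ_le_sigma_one {n : ℕ} (hn : 1 < n) : n + 1 ≤ sigma 1 n := by
  rw [sigma_one_apply]
  have hsub : ({n, 1} : Finset ℕ) ⊆ n.divisors := by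
    intro d hd
    simp only [Finset.mem_insert, Finset.mem_singleton] at hd
    rcases hd with rfl | rfl <;> simp <;> omega
  calc n + 1 = ∑ d ∈ ({n, 1} : Finset ℕ), d := by rw [Finset.sum_pair (by omega)]
    _ ≤ ∑ d ∈ n.divisors, d := Finset.sum_le_sum_of_subset hsub

theorem two_dvd_sigma_one_prime_pow {p a : ℕ} (hp : p.Prime) (hp' : Odd p) (ha : Odd a) :
    2 ∣ sigma 1 (p ^ a) := by
  rw [sigma_one_apply_prime_pow hp, ← even_iff_two_dvd, Finset.even_sum_iff_even_card_odd,
    Finset.filter_true_of_mem fun _ _ => hp'.pow, Finset.card_range]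
  exact ha.add_one

theorem sigma_one_prime_sq {p : ℕ} (hp : p.Prime) : sigma 1 (p ^ 2) = p ^ 2 + p + 1 := by
  rw [sigma_one_apply_prime_pow hp]
  simp [Finset.sum_range_succ]
  ring

/-- A prime divisor of `n ^ 2 + n + 1` other than `3` is congruent to `1` modulo `3`. -/
theorem mod_three_eq_one_of_prime_dvd {n l : ℕ} (hl : l.Prime) (h3 : l ≠ 3)
    (h : l ∣ n ^ 2 + n + 1) : l % 3 = 1 := by
  have := Fact.mk hl
  have hz : (n : ZMod l) ^ 2 + n + 1 = 0 := by
    exact_mod_cast (ZMod.natCast_eq_zero_iff _ l).2 h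
  have hcube : (n : ZMod l) ^ 3 = 1 := by linear_combination ((n : ZMod l) - 1) * hz
  have hne : (n : ZMod l) ≠ 1 := by
    intro h1
    rw [h1] at hz
    have : ((3 : ℕ) : ZMod l) = 0 := by push_cast; linear_combination hz
    rw [ZMod.natCast_eq_zero_iff] at this
    exact h3 ((Nat.prime_dvd_prime_iff_eq hl Nat.prime_three).1 this)
  have hord : orderOf (n : ZMod l) = 3 := orderOf_eq_prime hcube hne
  have hn0 : (n : ZMod l) ≠ 0 := by
    rintro h0
    simp [h0] at hcube
  have hd : 3 ∣ l - 1 := hord ▸ orderOf_dvd_of_pow_eq_one (ZMod.pow_card_sub_one_eq_one hn0)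
  have := hl.two_le
  omega

theorem pow_two_mul_card_le_prod {p : ℕ} {e : ℕ → ℕ} {S : Finset ℕ} (hp : 0 < p)
    (hS : ∀ u ∈ S, p ≤ u) (he : ∀ u ∈ S, 2 ≤ e u) : p ^ (2 * S.card) ≤ ∏ u ∈ S, u ^ e u := by
  rw [pow_mul, ← Finset.prod_const]
  refine Finset.prod_le_prod' fun u hu => ?_
  exact (Nat.pow_le_pow_left (hS u hu) 2).trans
    (Nat.pow_le_pow_right (hp.trans_le (hS u hu)) (he u hu))

section Perfect

variable {N : ℕ}

theorem prod_sigma_one_eq_two_mul (hperf : N.Perfect) :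
    ∏ u ∈ N.primeFactors, sigma 1 (u ^ N.factorization u) = 2 * N := by
  rw [← (Nat.perfect_iff_sum_divisors_eq_two_mul hperf.2).1 hperf, ← sigma_one_apply,
    isMultiplicative_sigma.multiplicative_factorization _ hperf.2.ne']
  rfl

theorem sigma_one_dvd_two_mul (hperf : N.Perfect) {u : ℕ} (hu : u ∈ N.primeFactors) :
    sigma 1 (u ^ N.factorization u) ∣ 2 * N :=
  prod_sigma_one_eq_two_mul hperf ▸
    Finset.dvd_prod_of_mem (fun u => sigma 1 (u ^ N.factorization u)) hu

/-- At most one prime occurs to an odd power in an odd perfect number. -/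
theorem eq_of_odd_factorization (hodd : Odd N) (hperf : N.Perfect) {u v : ℕ}
    (hu : u ∈ N.primeFactors) (hv : v ∈ N.primeFactors)
    (hu' : Odd (N.factorization u)) (hv' : Odd (N.factorization v)) : u = v := by
  by_contra huv
  have hprod := prod_sigma_one_eq_two_mul hperf
  rw [← Finset.mul_prod_erase _ _ hu,
    ← Finset.mul_prod_erase _ _ (Finset.mem_erase.2 ⟨Ne.symm huv, hv⟩)] at hprod
  have h1 := two_dvd_sigma_one_prime_pow (Nat.prime_of_mem_primeFactors hu)
    (hodd.of_dvd_nat (Nat.dvd_of_mem_primeFactors hu)) hu'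
  have h2 := two_dvd_sigma_one_prime_pow (Nat.prime_of_mem_primeFactors hv)
    (hodd.of_dvd_nat (Nat.dvd_of_mem_primeFactors hv)) hv'
  have h4 : 2 * 2 ∣ 2 * N := hprod ▸ mul_dvd_mul h1 (h2.mul_right _)
  obtain ⟨k, rfl⟩ := hodd
  omega

/-- If an odd perfect number has least prime divisor `p`, and all its prime divisors other than
`q` occur exactly twice while `q` occurs once, then `q` is not small compared to `p ^ 2`. -/
theorem sq_lt_two_mul_of_least_prime (hodd : Odd N) (hperf : N.Perfect) {p q : ℕ}
    (hp : p ∈ N.primeFactors) (hq : q ∈ N.primeFactors) (hle : ∀ u ∈ N.primeFactors, p ≤ u)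
    (hq1 : N.factorization q = 1) (h2 : ∀ u ∈ N.primeFactors, u ≠ q → N.factorization u = 2) :
    p ^ 2 < 2 * q := by
  by_contra! hsmall
  have hN : N ≠ 0 := hperf.2.ne'
  have hpP := Nat.prime_of_mem_primeFactors hp
  have hqP := Nat.prime_of_mem_primeFactors hq
  have hpodd : Odd p := hodd.of_dvd_nat (Nat.dvd_of_mem_primeFactors hp)
  have hqodd : Odd q := hodd.of_dvd_nat (Nat.dvd_of_mem_primeFactors hq)
  have hpq : p < q := by
    have hd := sigma_one_dvd_two_mul hperf hq
    rw [hq1, sigma_one_apply_prime_pow hqP] at hd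
    simp only [Finset.sum_range_succ, Finset.sum_range_zero, pow_zero, pow_one] at hd
    have hq2 := hqP.two_le
    obtain ⟨k, rfl⟩ := hqodd
    have hk : k + 1 ∣ N := by
      refine Nat.dvd_of_mul_dvd_mul_left two_pos ?_
      convert hd using 1
      ring
    obtain ⟨l, hl, hlk⟩ := Nat.exists_prime_and_dvd (show k + 1 ≠ 1 by omega)
    have h1 := hle l (Nat.mem_primeFactors.2 ⟨hl, hlk.trans hk, hN⟩)
    have h3 := Nat.le_of_dvd (by omega) hlk
    omega
  have hsq : ∀ u ∈ N.primeFactors, u ≠ q → u ^ 2 + u + 1 ∣ N := by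
    intro u hu huq
    have hd := sigma_one_dvd_two_mul hperf hu
    rw [h2 u hu huq, sigma_one_prime_sq (Nat.prime_of_mem_primeFactors hu)] at hd
    refine Nat.Coprime.dvd_of_dvd_mul_left ?_ hd
    rw [Nat.coprime_two_right]
    have := (Nat.even_mul_succ_self u).add_one
    convert this using 1
    ring
  have h3N : ¬ 3 ∣ N := by
    intro h3
    have h1 := hle 3 (Nat.mem_primeFactors.2 ⟨Nat.prime_three, h3, hN⟩)
    have h4 := hpP.two_le
    obtain ⟨k, hk⟩ := hpodd
    obtain ⟨l, hl⟩ := hqodd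
    obtain rfl : p = 3 := by omega
    omega
  have hdvd := hsq p hp hpq.ne
  have huniq : ∀ l, l.Prime → l ∣ p ^ 2 + p + 1 → l = q := by
    intro l hl hlp
    by_contra hlq
    have hlN := hlp.trans hdvd
    have hmod := mod_three_eq_one_of_prime_dvd hl (by rintro rfl; exact h3N hlN) hlp
    refine h3N (dvd_trans ?_ (hsq l (Nat.mem_primeFactors.2 ⟨hl, hlN, hN⟩) hlq))
    simp [Nat.dvd_iff_mod_eq_zero, Nat.add_mod, Nat.pow_mod, hmod]
  have hpow := Nat.eq_prime_pow_of_unique_prime_dvd (p := q) (n := p ^ 2 + p + 1) (by omega)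
    fun {d} hd hdv => huniq d hd hdv
  have hexp : (p ^ 2 + p + 1).primeFactorsList.length ≤ 1 := by
    refine le_of_le_of_eq ((hqP.pow_dvd_iff_le_factorization hN).1 ?_) hq1
    rwa [← hpow]
  have : p ^ 2 + p + 1 ≤ q := by
    calc p ^ 2 + p + 1 = q ^ (p ^ 2 + p + 1).primeFactorsList.length := hpow
      _ ≤ q ^ 1 := Nat.pow_le_pow_right hqP.pos hexp
      _ = q := pow_one q
  omega

/-- If a perfect number `B * R`, with `B` and `R` coprime, has only prime divisors `≥ p` in `B`,
and `2 * R ≤ p`, then `R = 1`. -/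
theorem eq_one_of_perfect_mul {B R p : ℕ} (hperf : (B * R).Perfect) (hcop : B.Coprime R)
    (hB : ∀ u, u.Prime → u ∣ B → p ≤ u) (hB1 : 1 < B) (hR : 2 * R ≤ p) : R = 1 := by
  have hsig : sigma 1 B * sigma 1 R = 2 * (B * R) := by
    rw [← isMultiplicative_sigma.map_mul_of_coprime hcop, sigma_one_apply]
    exact (Nat.perfect_iff_sum_divisors_eq_two_mul hperf.2).1 hperf
  have hR0 : 0 < R := Nat.pos_of_mul_pos_left hperf.2
  have hσB := succ_le_sigma_one hB1
  have hσR0 : 0 < sigma 1 R := by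
    refine Nat.pos_of_ne_zero fun h => ?_
    rw [h, mul_zero] at hsig
    have := hperf.2
    omega
  have hσR : sigma 1 R < 2 * R := by
    by_contra! h
    have : (B + 1) * (2 * R) ≤ 2 * (B * R) := hsig ▸ Nat.mul_le_mul hσB h
    nlinarith
  have hcopσ : (sigma 1 R).Coprime B := by
    refine Nat.Coprime.symm (Nat.coprime_of_dvd fun u hu huB huR => ?_)
    have h1 := hB u hu huB
    have h2 := Nat.le_of_dvd hσR0 huR
    omega
  have hdvd : sigma 1 R ∣ 2 * R := by
    refine hcopσ.dvd_of_dvd_mul_left ?_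
    exact ⟨sigma 1 B, by rw [mul_comm (sigma 1 R), hsig]; ring⟩
  by_contra hR1
  have hgt := succ_le_sigma_one (show 1 < R by omega)
  obtain ⟨c, hc⟩ := hdvd
  rcases c with _ | _ | c
  · omega
  · omega
  · nlinarith

end Perfect

/-- Let N be an odd perfect number and let p_1 < ... < p_k be its
distinct prime divisors. Then for every integer i with 0 ≤ i ≤ k-1, the
(i+1)-th largest prime divisor p_{k-i} (i.e., the prime divisor with exactly
i prime divisors of N above it) satisfies (p_{k-i})^(2i+2) < 2N. -/
theorem stmt_0 (N : ℕ) (hodd : Odd N) (hperf : Nat.Perfect N)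
    (i p : ℕ) (hp : p ∈ N.primeFactors)
    (hcount : (N.primeFactors.filter (fun q => p < q)).card = i) :
    p ^ (2 * i + 2) < 2 * N := by
  by_contra! hcon
  have hN : N ≠ 0 := hperf.2.ne'
  have hp0 : 0 < p := (Nat.prime_of_mem_primeFactors hp).pos
  set e : ℕ → ℕ := fun u => N.factorization u with he
  set T := N.primeFactors.filter (fun u => p ≤ u) with hT
  set B := ∏ u ∈ T, u ^ e u with hBdef
  set R := ∏ u ∈ N.primeFactors.filter (fun u => ¬ p ≤ u), u ^ e u with hRdef
  have hBR : B * R = N := by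
    rw [hBdef, hRdef, hT, Finset.prod_filter_mul_prod_filter_not]
    exact Nat.prod_factorization_pow_eq_self hN
  have hTN : ∀ {u}, u ∈ T → u ∈ N.primeFactors := fun h => (Finset.mem_filter.1 h).1
  have hTp : ∀ {u}, u ∈ T → p ≤ u := fun h => (Finset.mem_filter.1 h).2
  have hcard : T.card = i + 1 := by
    have : T = insert p (N.primeFactors.filter (fun q => p < q)) := by
      ext u
      simp only [hT, Finset.mem_filter, Finset.mem_insert]
      constructor
      · rintro ⟨h1, h2⟩
        rcases h2.eq_or_lt with h | h
        · exact Or.inl h.symm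
        · exact Or.inr ⟨h1, h⟩
      · rintro (rfl | ⟨h1, h2⟩)
        · exact ⟨hp, le_rfl⟩
        · exact ⟨h1, h2.le⟩
    rw [this, Finset.card_insert_of_notMem (by simp), hcount]
  have hR0 : 0 < R := Nat.pos_of_mul_pos_left (hBR ▸ hperf.2)
  have hepos : ∀ u ∈ N.primeFactors, 0 < e u := fun u hu =>
    (Nat.prime_of_mem_primeFactors hu).factorization_pos_of_dvd hN (Nat.dvd_of_mem_primeFactors hu)
  obtain ⟨q, hqT, hq1⟩ : ∃ q ∈ T, e q = 1 := by
    by_contra! hne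
    have hle : p ^ (2 * T.card) ≤ B := pow_two_mul_card_le_prod hp0 (fun u hu => hTp hu)
      fun u hu => by
        have := hepos u (hTN hu)
        have := hne u hu
        omega
    rw [hcard, mul_add, mul_one] at hle
    have : B ≤ N := hBR ▸ Nat.le_mul_of_pos_right B hR0
    have := hperf.2
    omega
  have heven : ∀ u ∈ N.primeFactors, u ≠ q → Even (e u) := by
    intro u hu huq
    by_contra hno
    exact huq (eq_of_odd_factorization hodd hperf hu (hTN hqT) (Nat.not_even_iff_odd.1 hno)
      (by rw [show N.factorization q = 1 from hq1]; exact odd_one))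
  have he2 : ∀ u ∈ N.primeFactors, u ≠ q → 2 ≤ e u := by
    intro u hu huq
    have := hepos u hu
    obtain ⟨k, hk⟩ := heven u hu huq
    omega
  have hBq : B = q * ∏ u ∈ T.erase q, u ^ e u := by
    rw [hBdef, ← Finset.mul_prod_erase _ _ hqT, hq1, pow_one]
  have hcard' : (T.erase q).card = i := by rw [Finset.card_erase_of_mem hqT, hcard]; rfl
  have hprod : p ^ (2 * i) ≤ ∏ u ∈ T.erase q, u ^ e u := by
    rw [← hcard']
    exact pow_two_mul_card_le_prod hp0 (fun u hu => hTp (Finset.mem_of_mem_erase hu))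
      fun u hu => he2 u (hTN (Finset.mem_of_mem_erase hu)) (Finset.ne_of_mem_erase hu)
  have hqR : 2 * (q * R) ≤ p ^ 2 := by
    refine Nat.le_of_mul_le_mul_left ?_ (pow_pos hp0 (2 * i))
    calc p ^ (2 * i) * (2 * (q * R)) ≤ (∏ u ∈ T.erase q, u ^ e u) * (2 * (q * R)) :=
          Nat.mul_le_mul_right _ hprod
      _ = 2 * (B * R) := by rw [hBq]; ring
      _ ≤ p ^ (2 * i + 2) := by rw [hBR]; exact hcon
      _ = p ^ (2 * i) * p ^ 2 := pow_add _ _ _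
  have hpq : p ≤ q := hTp hqT
  have hRp : 2 * R ≤ p := by
    refine Nat.le_of_mul_le_mul_left ?_ hp0
    calc p * (2 * R) ≤ q * (2 * R) := Nat.mul_le_mul_right _ hpq
      _ ≤ p * p := by linarith [hqR, sq p]
  have hqP := Nat.prime_of_mem_primeFactors (hTN hqT)
  have hBprime : ∀ u, u.Prime → u ∣ B → p ≤ u := by
    intro u hu huB
    obtain ⟨v, hv, huv⟩ := (hu.prime.dvd_finsetProd_iff _).1 huB
    rw [(Nat.prime_dvd_prime_iff_eq hu (Nat.prime_of_mem_primeFactors (hTN hv))).1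
      (hu.dvd_of_dvd_pow huv)]
    exact hTp hv
  have hcop : B.Coprime R := by
    refine Nat.coprime_of_dvd fun u hu huB huR => ?_
    have h1 := hBprime u hu huB
    have h2 := Nat.le_of_dvd hR0 huR
    omega
  have hB1 : 1 < B := by
    rw [hBq]
    exact lt_of_lt_of_le hqP.one_lt
      (Nat.le_mul_of_pos_right q ((pow_pos hp0 _).trans_le hprod))
  have hR1 : R = 1 := eq_one_of_perfect_mul (hBR.symm ▸ hperf) hcop hBprime hB1 hRp
  have hNB : N = B := by rw [← hBR, hR1, mul_one]
  have hleast : ∀ u ∈ N.primeFactors, p ≤ u := fun u hu =>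
    hBprime u (Nat.prime_of_mem_primeFactors hu) (hNB ▸ Nat.dvd_of_mem_primeFactors hu)
  have hexact : ∀ u ∈ N.primeFactors, u ≠ q → N.factorization u = 2 := by
    intro u hu huq
    by_contra hne
    have h4 : 4 ≤ e u := by
      have h1 := he2 u hu huq
      obtain ⟨k, hk⟩ := heven u hu huq
      have h3 : e u ≠ 2 := hne
      omega
    have huT : u ∈ T.erase q := Finset.mem_erase.2 ⟨huq, Finset.mem_filter.2 ⟨hu, hleast u hu⟩⟩
    have hrest := pow_two_mul_card_le_prod (e := e) (S := (T.erase q).erase u) hp0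
      (fun v hv => hTp (Finset.mem_of_mem_erase (Finset.mem_of_mem_erase hv)))
      fun v hv => he2 v (hTN (Finset.mem_of_mem_erase (Finset.mem_of_mem_erase hv)))
        (Finset.ne_of_mem_erase (Finset.mem_of_mem_erase hv))
    have hi : ((T.erase q).erase u).card + 1 = i := by
      rw [Finset.card_erase_add_one huT, hcard']
    have hu4 : p ^ 4 ≤ u ^ e u := (Nat.pow_le_pow_left (hleast u hu) 4).trans
      (Nat.pow_le_pow_right (hp0.trans_le (hleast u hu)) h4)
    have : p ^ (2 * i + 2) ≤ N := by
      calc p ^ (2 * i + 2) = p ^ 4 * p ^ (2 * ((T.erase q).erase u).card) := by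
            rw [← pow_add, ← hi]; congr 1; ring
        _ ≤ u ^ e u * ∏ v ∈ (T.erase q).erase u, v ^ e v := Nat.mul_le_mul hu4 hrest
        _ = ∏ v ∈ T.erase q, v ^ e v := Finset.mul_prod_erase _ (fun v => v ^ e v) huT
        _ ≤ q * ∏ v ∈ T.erase q, v ^ e v := Nat.le_mul_of_pos_left _ hqP.pos
        _ = N := by rw [hNB, hBq]
    have := hperf.2
    omega
  have hfinal := sq_lt_two_mul_of_least_prime hodd hperf hp (hTN hqT) hleast hq1 hexact
  rw [hR1, mul_one] at hqR
  omega
end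

section
/- Let N be an odd perfect number with at least three distinct prime divisors, and let a be its third largest prime divisor. Then a < 2·N^(1/6), i.e., a^6 < 64·N. -/
open ArithmeticFunction in
theorem even_sigma_one_prime_pow {p i : ℕ} (hp : p.Prime) (hpo : Odd p) (hi : Odd i) :
    2 ∣ sigma 1 (p ^ i) := by
  obtain ⟨m, rfl⟩ := hi
  rw [sigma_one_apply_prime_pow hp]
  induction m with
  | zero =>
    obtain ⟨r, rfl⟩ := hpo
    exact ⟨r + 1, by simp [Finset.sum_range_succ]; ring⟩
  | succ m ih =>
    rw [show 2 * (m + 1) + 1 + 1 = (2 * m + 1 + 1) + 1 + 1 by ring, Finset.sum_range_succ,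
      Finset.sum_range_succ, add_assoc]
    exact dvd_add ih (hpo.pow.add_odd hpo.pow).two_dvd

/-- A factorization `p x² y² K` over primes at least `a` that satisfies the perfect number
equation, with `s` in the role of `σ(K)`, exceeds `a ^ 6 / 64`. -/
theorem pow_six_lt_of_sigma_eq {a p x y K s : ℕ} (ha : 0 < a)
    (hp : p.Prime) (hx : x.Prime) (hy : y.Prime)
    (hap : a ≤ p) (hax : a ≤ x) (hay : a ≤ y) (hK : 0 < K) (hs : 0 < s)
    (h : (p + 1) * (x ^ 2 + x + 1) * (y ^ 2 + y + 1) * s = 2 * (p * x ^ 2 * y ^ 2 * K)) :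
    a ^ 6 < 64 * (p * x ^ 2 * y ^ 2 * K) := by
  by_contra! hcon
  set D := p * x ^ 2 * y ^ 2 with hD
  set R := (p + 1) * (x ^ 2 + x + 1) * (y ^ 2 + y + 1) with hR
  have hDpos : 0 < D := by have := hp.pos; have := hx.pos; have := hy.pos; positivity
  have hDR : D < R := by
    have h1 : p * x ^ 2 ≤ p * (x ^ 2 + x + 1) := Nat.mul_le_mul_left _ (by omega)
    have h2 : p * (x ^ 2 + x + 1) < (p + 1) * (x ^ 2 + x + 1) :=
      Nat.mul_lt_mul_of_pos_right (by omega) (by omega)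
    exact Nat.mul_lt_mul_of_lt_of_le (h1.trans_lt h2) (by omega) (by omega)
  have haD : a ^ 5 ≤ D := by
    calc a ^ 5 = a * a ^ 2 * a ^ 2 := by ring
      _ ≤ D := by rw [hD]; gcongr
  have haK : 64 * K ≤ a := by
    have : a ^ 5 * (64 * K) ≤ a ^ 5 * a := by
      calc a ^ 5 * (64 * K) ≤ D * (64 * K) := by gcongr
        _ = 64 * (D * K) := by ring
        _ ≤ a ^ 6 := hcon
        _ = a ^ 5 * a := by ring
    exact Nat.le_of_mul_le_mul_left this (by positivity)
  have hsK : s ≤ 2 * K := by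
    have : D * s ≤ D * (2 * K) := by
      calc D * s ≤ R * s := by gcongr
        _ = D * (2 * K) := by rw [h]; ring
    exact Nat.le_of_mul_le_mul_left this hDpos
  have cop : ∀ q : ℕ, q.Prime → a ≤ q → q.Coprime s := fun q hq haq =>
    (hq.coprime_iff_not_dvd).2 fun hd => by have := Nat.le_of_dvd hs hd; omega
  have hcop : D.Coprime s :=
    ((cop p hp hap).mul_left ((cop x hx hax).pow_left 2)).mul_left ((cop y hy hay).pow_left 2)
  obtain ⟨t, ht⟩ : D ∣ R := hcop.dvd_of_dvd_mul_right ⟨2 * K, by rw [h]; ring⟩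
  have ht2 : 2 ≤ t := by
    by_contra! hlt
    have : D * t ≤ D * 1 := Nat.mul_le_mul_left _ (by omega)
    omega
  have hquad : ∀ z : ℕ, 64 ≤ z → 4 * (z ^ 2 + z + 1) ≤ 5 * z ^ 2 := fun z hz => by nlinarith
  have hupper : 64 * R ≤ 125 * D := by
    calc 64 * R = (4 * (p + 1)) * (4 * (x ^ 2 + x + 1)) * (4 * (y ^ 2 + y + 1)) := by
          rw [hR]; ring
      _ ≤ (5 * p) * (5 * x ^ 2) * (5 * y ^ 2) :=
          Nat.mul_le_mul (Nat.mul_le_mul (by omega) (hquad x (by omega))) (hquad y (by omega))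
      _ = 125 * D := by rw [hD]; ring
  have hlower : D * 2 ≤ D * t := Nat.mul_le_mul_left _ ht2
  omega

open ArithmeticFunction in
theorem pow_six_lt_of_three_primes {N a b c : ℕ} (hodd : Odd N) (hperf : Nat.Perfect N)
    (ha : a.Prime) (hb : b.Prime) (hc : c.Prime) (hab : a < b) (hac : a < c) (hbc : b ≠ c)
    (haN : a ∣ N) (hbN : b ∣ N) (hcN : c ∣ N) : a ^ 6 < 64 * N := by
  have hN : N ≠ 0 := hperf.2.ne'
  have hσ : sigma 1 N = 2 * N := by
    rw [sigma_one_apply]; exact (Nat.perfect_iff_sum_divisors_eq_two_mul hperf.2).1 hperf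
  have hao := hodd.of_dvd_nat haN
  have hbo := hodd.of_dvd_nat hbN
  have hco := hodd.of_dvd_nat hcN
  obtain ⟨i, A, hA, rfl⟩ := Nat.exists_eq_pow_mul_and_not_dvd hN a ha.ne_one
  have hA0 : A ≠ 0 := right_ne_zero_of_mul hN
  have cab := (Nat.coprime_primes ha hb).2 hab.ne
  have cac := (Nat.coprime_primes ha hc).2 hac.ne
  have cbc := (Nat.coprime_primes hb hc).2 hbc
  have hbA : b ∣ A := (cab.symm.pow_right i).dvd_of_dvd_mul_left hbN
  have hcA : c ∣ A := (cac.symm.pow_right i).dvd_of_dvd_mul_left hcN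
  obtain ⟨j, B, hB, rfl⟩ := Nat.exists_eq_pow_mul_and_not_dvd hA0 b hb.ne_one
  have hB0 : B ≠ 0 := right_ne_zero_of_mul hA0
  have hcB : c ∣ B := (cbc.symm.pow_right j).dvd_of_dvd_mul_left hcA
  obtain ⟨k, K, hK, rfl⟩ := Nat.exists_eq_pow_mul_and_not_dvd hB0 c hc.ne_one
  have hK0 : 0 < K := Nat.pos_of_ne_zero (right_ne_zero_of_mul hB0)
  have hi : i ≠ 0 := by rintro rfl; rw [pow_zero, one_mul] at haN; exact hA haN
  have hj : j ≠ 0 := by rintro rfl; rw [pow_zero, one_mul] at hbA; exact hB hbA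
  have hk : k ≠ 0 := by rintro rfl; rw [pow_zero, one_mul] at hcB; exact hK hcB
  rw [isMultiplicative_sigma.map_mul_of_coprime (((ha.coprime_iff_not_dvd).2 hA).pow_left i),
    isMultiplicative_sigma.map_mul_of_coprime (((hb.coprime_iff_not_dvd).2 hB).pow_left j),
    isMultiplicative_sigma.map_mul_of_coprime (((hc.coprime_iff_not_dvd).2 hK).pow_left k)] at hσ
  have hs : 0 < sigma 1 K := sigma_pos 1 K hK0.ne'
  have not_four_dvd : ¬ 4 ∣ 2 * (a ^ i * (b ^ j * (c ^ k * K))) := by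
    obtain ⟨r, hr⟩ := hodd
    omega
  have hij : ¬ (Odd i ∧ Odd j) := fun ⟨h1, h2⟩ => not_four_dvd <| by
    rw [← hσ, ← mul_assoc]
    exact (mul_dvd_mul (even_sigma_one_prime_pow ha hao h1)
      (even_sigma_one_prime_pow hb hbo h2)).mul_right _
  have hik : ¬ (Odd i ∧ Odd k) := fun ⟨h1, h2⟩ => not_four_dvd <| by
    rw [← hσ]
    exact mul_dvd_mul (even_sigma_one_prime_pow ha hao h1)
      (((even_sigma_one_prime_pow hc hco h2).mul_right _).mul_left _)
  have hjk : ¬ (Odd j ∧ Odd k) := fun ⟨h1, h2⟩ => not_four_dvd <| by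
    rw [← hσ]
    exact (mul_dvd_mul (even_sigma_one_prime_pow hb hbo h1)
      ((even_sigma_one_prime_pow hc hco h2).mul_right _)).mul_left _
  rcases le_or_gt 6 (i + j + k) with h6 | h6
  · have : a ^ 6 ≤ a ^ i * (b ^ j * (c ^ k * K)) := by
      calc a ^ 6 ≤ a ^ (i + j + k) := Nat.pow_le_pow_right ha.pos h6
        _ = a ^ i * (a ^ j * (a ^ k * 1)) := by ring
        _ ≤ a ^ i * (b ^ j * (c ^ k * K)) := by gcongr; exact hK0
    have := Nat.pos_of_ne_zero hN
    omega
  have sigma_prime : ∀ q : ℕ, q.Prime → sigma 1 (q ^ 1) = q + 1 := fun q hq => by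
    rw [sigma_one_apply_prime_pow hq]; simp [Finset.sum_range_succ]; ring
  have sigma_sq : ∀ q : ℕ, q.Prime → sigma 1 (q ^ 2) = q ^ 2 + q + 1 := fun q hq => by
    rw [sigma_one_apply_prime_pow hq]; simp [Finset.sum_range_succ]; ring
  have hcases : (i = 1 ∧ j = 2 ∧ k = 2) ∨ (i = 2 ∧ j = 1 ∧ k = 2) ∨ (i = 2 ∧ j = 2 ∧ k = 1) := by
    rw [Nat.odd_iff, Nat.odd_iff] at hij hik hjk
    clear hσ not_four_dvd hN hA0 hB0 hodd hperf
    have hi4 : i < 4 := by omega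
    have hj4 : j < 4 := by omega
    interval_cases i <;> interval_cases j <;> omega
  rcases hcases with ⟨rfl, rfl, rfl⟩ | ⟨rfl, rfl, rfl⟩ | ⟨rfl, rfl, rfl⟩
  · rw [sigma_prime a ha, sigma_sq b hb, sigma_sq c hc] at hσ
    have := pow_six_lt_of_sigma_eq ha.pos ha hb hc le_rfl hab.le hac.le hK0 hs
      (by linarith)
    linarith
  · rw [sigma_sq a ha, sigma_prime b hb, sigma_sq c hc] at hσ
    have := pow_six_lt_of_sigma_eq ha.pos hb ha hc hab.le le_rfl hac.le hK0 hs
      (by linarith)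
    linarith
  · rw [sigma_sq a ha, sigma_sq b hb, sigma_prime c hc] at hσ
    have := pow_six_lt_of_sigma_eq ha.pos hc ha hb hac.le le_rfl hab.le
      hK0 hs (by linarith)
    linarith

/-- Let N be an odd perfect number with at least three distinct
prime divisors, and let a be its third largest prime divisor (i.e., exactly two
prime divisors of N exceed a). Then a < 2·N^(1/6), i.e., a^6 < 64·N. -/
theorem stmt_1 (N : ℕ) (hodd : Odd N) (hperf : Nat.Perfect N)
    (hk : 3 ≤ N.primeFactors.card)
    (a : ℕ) (ha : a ∈ N.primeFactors)
    (ha2 : (N.primeFactors.filter (fun q => a < q)).card = 2) :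
    a ^ 6 < 64 * N := by
  obtain ⟨b, c, hbc, hset⟩ := Finset.card_eq_two.1 ha2
  have hb : b ∈ N.primeFactors.filter (fun q => a < q) := by simp [hset]
  have hc : c ∈ N.primeFactors.filter (fun q => a < q) := by simp [hset]
  rw [Finset.mem_filter] at hb hc
  exact pow_six_lt_of_three_primes hodd hperf (Nat.prime_of_mem_primeFactors ha)
    (Nat.prime_of_mem_primeFactors hb.1) (Nat.prime_of_mem_primeFactors hc.1) hb.2 hc.2 hbc
    (Nat.dvd_of_mem_primeFactors ha) (Nat.dvd_of_mem_primeFactors hb.1)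
    (Nat.dvd_of_mem_primeFactors hc.1)
end

section
/- Let N be an odd perfect number with at least three distinct prime divisors, let c be its largest prime divisor, b its second largest prime divisor, and a its third largest prime divisor. Then abc < (2N)^(3/5), i.e., (abc)^5 < (2N)^3. -/
open ArithmeticFunction ArithmeticFunction.sigma in
theorem Nat.Perfect.sigma_one_eq {N : ℕ} (h : N.Perfect) : σ 1 N = 2 * N := by
  rw [sigma_one_apply]
  exact (Nat.perfect_iff_sum_divisors_eq_two_mul h.2).1 h

open ArithmeticFunction ArithmeticFunction.sigma in
theorem Nat.Perfect.sigma_one_le_of_dvd {N d : ℕ} (h : N.Perfect) (hd : d ∣ N) :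
    σ 1 d ≤ 2 * d := by
  have hab : ¬ N.Abundant :=
    ((Nat.perfect_iff_not_abundant_and_not_deficient h.2.ne).1 h).1
  by_contra! hlt
  rw [sigma_one_apply] at hlt
  exact hab ((Nat.abundant_iff_sum_divisors.2 hlt).of_dvd hd h.2.ne')

theorem Nat.coprime_geom_sum (x e : ℕ) :
    Nat.Coprime x (∑ i ∈ Finset.range (e + 1), x ^ i) := by
  rw [geom_sum_succ]
  simp

theorem Nat.two_dvd_geom_sum {x e : ℕ} (hx : Odd x) (he : Odd e) :
    2 ∣ ∑ i ∈ Finset.range (e + 1), x ^ i := by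
  rw [← even_iff_two_dvd, Finset.even_sum_iff_even_card_odd]
  simpa [hx.pow] using he.add_one

/-- The inequality `(q * x * y) ^ 5 < 8 * N ^ 3` for `N = q * x ^ e * y ^ f * m`, with the factor
`q ^ 3` cancelled, follows by also cancelling `(x * y) ^ 5`. -/
theorem mul_pow_five_lt_of_sq_lt {q x y e f m : ℕ} (hx : 0 < x) (hy : 0 < y)
    (he : 2 ≤ e) (hf : 2 ≤ f)
    (h : q ^ 2 < 8 * (x * (x ^ (e - 2)) ^ 3 * (y * (y ^ (f - 2)) ^ 3) * m ^ 3)) :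
    q ^ 2 * (x * y) ^ 5 < 8 * (x ^ e * y ^ f * m) ^ 3 := by
  obtain ⟨e, rfl⟩ := Nat.exists_eq_add_of_le he
  obtain ⟨f, rfl⟩ := Nat.exists_eq_add_of_le hf
  simp only [Nat.add_sub_cancel_left] at h
  calc q ^ 2 * (x * y) ^ 5
      < 8 * (x * (x ^ e) ^ 3 * (y * (y ^ f) ^ 3) * m ^ 3) * (x * y) ^ 5 := by gcongr
    _ = 8 * (x ^ (2 + e) * y ^ (2 + f) * m) ^ 3 := by ring

/-- For odd `x`, a divisor `q > x` of `x ^ 2 + x + 1` is not congruent to `-1` modulo `x`. -/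
theorem not_dvd_add_one_of_dvd_sq_add {q x : ℕ} (hxo : Odd x) (hx3 : 3 ≤ x)
    (hxq : x < q) (hq : q ∣ x ^ 2 + x + 1) : ¬ x ∣ q + 1 := by
  intro hd
  obtain ⟨k, hk⟩ := hq
  have hkodd : Odd k := by
    have : Odd (q * k) := by
      rw [← hk]
      have : Even (x ^ 2 + x) := by
        rw [show x ^ 2 + x = x * (x + 1) by ring]
        exact Nat.even_mul_succ_self x
      exact this.add_one
    exact (Nat.odd_mul.1 this).2
  have h1 : x ∣ k + 1 := by
    have h2 : x ∣ x * (x + 1) + (k + 1) := by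
      have : x * (x + 1) + (k + 1) = (q + 1) * k := by linear_combination hk
      rw [this]
      exact hd.mul_right k
    exact (Nat.dvd_add_right (Dvd.intro _ rfl)).1 h2
  have h2 : 2 * x ∣ k + 1 :=
    Nat.Coprime.mul_dvd_of_dvd_of_dvd (Nat.coprime_two_left.2 hxo)
      (even_iff_two_dvd.1 hkodd.add_one) h1
  have h3 := Nat.le_of_dvd (by omega) h2
  have h4 : (x + 1) * (2 * x - 1) ≤ q * k := Nat.mul_le_mul hxq (by omega)
  obtain ⟨z, rfl⟩ := Nat.exists_eq_add_of_le hx3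
  rw [show 2 * (3 + z) - 1 = 2 * z + 5 by omega] at h4
  nlinarith

theorem sq_lt_of_dvd_sq_add {q x y f m B C : ℕ} (hq : q.Prime) (hx : x.Prime) (hy : y.Prime)
    (hxo : Odd x) (hyo : Odd y) (hxy : x ≠ y) (hxq : x < q) (hyq : y < q)
    (hf : Even f) (hf2 : 2 ≤ f) (hm : 0 < m) (hC0 : 0 < C)
    (hB : B = ∑ i ∈ Finset.range (f + 1), y ^ i)
    (H : (q + 1) * (x ^ 2 + x + 1) * B * C = 2 * (q * x ^ 2 * y ^ f * m))
    (hB2 : B ≤ 2 * y ^ f) (hC2 : C ≤ 2 * m) (hqA : q ∣ x ^ 2 + x + 1) :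
    q ^ 2 < 8 * (x * (y * (y ^ (f - 2)) ^ 3) * m ^ 3) := by
  have hx3 : 3 ≤ x := by have := hx.two_le; obtain ⟨r, rfl⟩ := hxo; omega
  have hy3 : 3 ≤ y := by have := hy.two_le; obtain ⟨r, rfl⟩ := hyo; omega
  have hqle : q ≤ x ^ 2 + x + 1 := Nat.le_of_dvd (by positivity) hqA
  have hq2 : q ≤ 2 * x ^ 2 := by nlinarith
  have hqsq : q ^ 2 ≤ 4 * x ^ 4 := by
    calc q ^ 2 ≤ (2 * x ^ 2) ^ 2 := by gcongr
      _ = 4 * x ^ 4 := by ring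
  have hqsq' : q ^ 2 < 3 * x ^ 4 := by
    calc q ^ 2 ≤ (x ^ 2 + x + 1) ^ 2 := by gcongr
      _ < 3 * x ^ 4 := by
        obtain ⟨z, rfl⟩ := Nat.exists_eq_add_of_le hx3
        ring_nf
        nlinarith [Nat.zero_le (z ^ 2), Nat.zero_le (z ^ 3), Nat.zero_le (z ^ 4)]
  have hB0 : 0 < B := by
    rw [hB, geom_sum_succ]; omega
  have ht : 1 ≤ y ^ (f - 2) := Nat.one_le_pow _ _ hy.pos
  have ht3 : 1 ≤ (y ^ (f - 2)) ^ 3 := Nat.one_le_pow _ _ ht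
  have hm3 : 1 ≤ m ^ 3 := Nat.one_le_pow _ _ hm
  have hxnq := not_dvd_add_one_of_dvd_sq_add hxo hx3 hxq hqA
  have hxBC : x ^ 2 ∣ C * B := by
    have h1 : x ^ 2 ∣ (q + 1) * (x ^ 2 + x + 1) * (C * B) := by
      refine ⟨2 * (q * y ^ f * m), ?_⟩
      linear_combination H
    have hcA : Nat.Coprime x (x ^ 2 + x + 1) := by
      rw [show x ^ 2 + x + 1 = 1 + x * (x + 1) by ring]
      simp
    exact (Nat.Coprime.pow_left 2
      (Nat.Coprime.mul_right ((hx.coprime_iff_not_dvd).2 hxnq) hcA)).dvd_of_dvd_mul_left h1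
  by_cases hxC : x ∣ C
  · have h1 : x ≤ 2 * m := (Nat.le_of_dvd hC0 hxC).trans hC2
    have h2 : x ^ 3 ≤ 8 * m ^ 3 := by
      calc x ^ 3 ≤ (2 * m) ^ 3 := by gcongr
        _ = 8 * m ^ 3 := by ring
    calc q ^ 2 < 3 * x ^ 4 := hqsq'
      _ = x * (3 * 1) * x ^ 3 := by ring
      _ ≤ x * (y * (y ^ (f - 2)) ^ 3) * (8 * m ^ 3) := by gcongr
      _ = _ := by ring
  have hxB : x ^ 2 ∣ B := by
    exact (Nat.Coprime.pow_left 2 ((hx.coprime_iff_not_dvd).2 hxC)).dvd_of_dvd_mul_left hxBC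
  have hxBle := Nat.le_of_dvd hB0 hxB
  by_cases hf4 : 4 ≤ f
  · obtain ⟨g, rfl⟩ := Nat.exists_eq_add_of_le hf4
    rw [show 4 + g - 2 = 2 + g by omega]
    have h1 : x ^ 2 ≤ 2 * y ^ (4 + g) := hxBle.trans hB2
    have hg : 1 ≤ y ^ (3 * g) := Nat.one_le_pow _ _ hy.pos
    have h2 : (x ^ 3) ^ 2 < (2 * (y * (y ^ (2 + g)) ^ 3)) ^ 2 := by
      have h3 : (x ^ 2) ^ 3 ≤ (2 * y ^ (4 + g)) ^ 3 := by gcongr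
      have h4 : (2 * (y * (y ^ (2 + g)) ^ 3)) ^ 2
          = (4 * y ^ 2 * y ^ (3 * g)) * (y ^ (4 + g)) ^ 3 := by ring
      have h5 : 36 * 1 ≤ (4 * y ^ 2) * y ^ (3 * g) := Nat.mul_le_mul (by nlinarith) hg
      have h6 : 0 < (y ^ (4 + g)) ^ 3 := by have := hy.pos; positivity
      calc (x ^ 3) ^ 2 = (x ^ 2) ^ 3 := by ring
        _ ≤ (2 * y ^ (4 + g)) ^ 3 := h3
        _ = 8 * (y ^ (4 + g)) ^ 3 := by ring
        _ < (4 * y ^ 2 * y ^ (3 * g)) * (y ^ (4 + g)) ^ 3 := by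
          apply Nat.mul_lt_mul_of_pos_right _ h6
          omega
        _ = _ := h4.symm
    have h7 : x ^ 3 < 2 * (y * (y ^ (2 + g)) ^ 3) := lt_of_pow_lt_pow_left₀ 2 (by positivity) h2
    calc q ^ 2 ≤ 4 * x ^ 4 := hqsq
      _ = 4 * x * x ^ 3 := by ring
      _ < 4 * x * (2 * (y * (y ^ (2 + g)) ^ 3)) := by
        apply Nat.mul_lt_mul_of_pos_left h7; omega
      _ = 8 * (x * (y * (y ^ (2 + g)) ^ 3) * 1) := by ring
      _ ≤ _ := by gcongr
  have hf' : f = 2 := by obtain ⟨r, rfl⟩ := hf; omega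
  subst hf'
  have hB' : B = y ^ 2 + y + 1 := by
    rw [hB]; simp [Finset.sum_range_succ]; ring
  have hxlty : x + 2 ≤ y := by
    rw [hB'] at hxBle
    have h1 : x ≤ y := by
      by_contra! hlt
      nlinarith
    obtain ⟨r, rfl⟩ := hxo
    obtain ⟨s, rfl⟩ := hyo
    omega
  by_cases hyC : y ∣ C
  · have h1 : x ≤ 2 * m := by
      have := (Nat.le_of_dvd hC0 hyC).trans hC2
      omega
    have h2 : x ^ 3 ≤ 8 * m ^ 3 := by
      calc x ^ 3 ≤ (2 * m) ^ 3 := by gcongr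
        _ = 8 * m ^ 3 := by ring
    calc q ^ 2 < 3 * x ^ 4 := hqsq'
      _ = x * (3 * 1) * x ^ 3 := by ring
      _ ≤ x * (y * (y ^ (2 - 2)) ^ 3) * (8 * m ^ 3) := by gcongr
      _ = _ := by ring
  exfalso
  obtain ⟨k, hk⟩ := hqA
  have hk0 : 0 < k := by
    rcases Nat.eq_zero_or_pos k with rfl | h
    · simp at hk
    · exact h
  have hyk : y ^ 2 ∣ (q + 1) * k := by
    have h1 : y ^ 2 ∣ (q * B * C) * ((q + 1) * k) := by
      refine ⟨2 * (q * x ^ 2 * m), ?_⟩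
      rw [hk] at H
      linear_combination H
    have hcB : Nat.Coprime y B := by rw [hB]; exact Nat.coprime_geom_sum y 2
    have hcq : Nat.Coprime y q := (Nat.coprime_primes hy hq).2 hyq.ne
    exact (Nat.Coprime.pow_left 2 (Nat.Coprime.mul_right (Nat.Coprime.mul_right hcq hcB)
      ((hy.coprime_iff_not_dvd).2 hyC))).dvd_of_dvd_mul_left h1
  have hy2 : x ^ 2 + x + 2 < y ^ 2 := by nlinarith
  by_cases hyq1 : y ∣ q + 1
  · by_cases hyk1 : y ∣ k
    · have h1 := Nat.le_of_dvd (by omega) hyq1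
      have h2 := Nat.le_of_dvd hk0 hyk1
      have h3 : (x + 1) * (x + 2) ≤ q * k := Nat.mul_le_mul (by omega) (by omega)
      nlinarith
    · have h1 : y ^ 2 ∣ q + 1 :=
        (Nat.Coprime.pow_left 2 ((hy.coprime_iff_not_dvd).2 hyk1)).dvd_of_dvd_mul_right hyk
      have := Nat.le_of_dvd (by omega) h1
      omega
  · have h1 : y ^ 2 ∣ k :=
      (Nat.Coprime.pow_left 2 ((hy.coprime_iff_not_dvd).2 hyq1)).dvd_of_dvd_mul_left hyk
    have h2 := Nat.le_of_dvd hk0 h1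
    have h3 : k ≤ q * k := Nat.le_mul_of_pos_left k hq.pos
    omega

theorem sq_lt_of_dvd_geom_sum_four {q x y f m A B C : ℕ} (hx : x.Prime)
    (hy3 : 3 ≤ y) (hqo : Odd q) (hxo : Odd x)
    (hf2 : 2 ≤ f) (hm : 0 < m) (hB0 : 0 < B) (hC0 : 0 < C)
    (hA : A = ∑ i ∈ Finset.range (4 + 1), x ^ i)
    (H : (q + 1) * A * B * C = 2 * (q * x ^ 4 * y ^ f * m))
    (hA2 : A ≤ 2 * x ^ 4) (hBC2 : B * C ≤ 2 * (y ^ f * m)) (hqA : q ∣ A) :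
    q ^ 2 < 8 * (x * (x ^ 2) ^ 3 * (y * (y ^ (f - 2)) ^ 3) * m ^ 3) := by
  have hxpos := hx.pos
  have hA0 : 0 < A := by rw [hA, geom_sum_succ]; omega
  have hcA : Nat.Coprime x A := by rw [hA]; exact Nat.coprime_geom_sum x 4
  have hA' : A = x ^ 4 + x ^ 3 + x ^ 2 + x + 1 := by
    rw [hA]; simp [Finset.sum_range_succ]; ring
  have hqle : q ≤ 2 * x ^ 4 := (Nat.le_of_dvd hA0 hqA).trans hA2
  obtain ⟨f, rfl⟩ := Nat.exists_eq_add_of_le hf2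
  rw [Nat.add_sub_cancel_left]
  set t := y ^ f with ht
  have ht1 : 1 ≤ t := Nat.one_le_pow _ _ (by omega)
  have hyf : y ^ (2 + f) = y ^ 2 * t := by rw [ht, pow_add]
  rw [hyf] at H hBC2
  set Y := y * t ^ 3 * m ^ 3 with hY
  by_cases hxY : x < 2 * Y
  · calc q ^ 2 ≤ (2 * x ^ 4) ^ 2 := by gcongr
      _ = 4 * x ^ 7 * x := by ring
      _ < 4 * x ^ 7 * (2 * Y) := by
        apply Nat.mul_lt_mul_of_pos_left hxY; positivity
      _ = _ := by rw [hY]; ring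
  exfalso
  push Not at hxY
  have hx6 : 6 ≤ x := by
    have : 3 * 1 * 1 ≤ Y := Nat.mul_le_mul (Nat.mul_le_mul hy3 (Nat.one_le_pow _ _ ht1))
      (Nat.one_le_pow _ _ hm)
    omega
  have hsmall : B * C < x ^ 2 := by
    have h1 : y ^ 2 * t * m ≤ Y ^ 2 := by
      calc y ^ 2 * t * m = y ^ 2 * t ^ 1 * m ^ 1 := by ring
        _ ≤ y ^ 2 * t ^ 6 * m ^ 6 := by gcongr <;> omega
        _ = Y ^ 2 := by rw [hY]; ring
    nlinarith
  have hx4 : x ^ 4 ∣ (q + 1) * (B * C) := by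
    have h1 : x ^ 4 ∣ A * ((q + 1) * (B * C)) := by
      refine ⟨2 * (q * (y ^ 2 * t) * m), ?_⟩
      linear_combination H
    exact (Nat.Coprime.pow_left 4 hcA).dvd_of_dvd_mul_left h1
  have hx3 : x ^ 3 ∣ q + 1 := by
    obtain ⟨u, v, hu, hv, huv⟩ := Nat.dvd_mul.1 hx4
    obtain ⟨i, -, rfl⟩ := (Nat.dvd_prime_pow hx).1 (Dvd.intro v huv)
    obtain ⟨j, -, rfl⟩ := (Nat.dvd_prime_pow hx).1 (Dvd.intro_left _ huv)
    rw [← pow_add] at huv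
    have hij : i + j = 4 := Nat.pow_right_injective hx.two_le huv
    have hj : j < 2 := (Nat.pow_lt_pow_iff_right hx.one_lt).1
      ((Nat.le_of_dvd (by positivity) hv).trans_lt hsmall)
    exact (pow_dvd_pow x (by omega)).trans hu
  obtain ⟨k, hk⟩ := hqA
  have hk0 : 0 < k := by
    rcases Nat.eq_zero_or_pos k with rfl | h
    · simp at hk; omega
    · exact h
  have hxk : x ∣ k + 1 := by
    have h2 : x ∣ x * (x ^ 3 + x ^ 2 + x + 1) + (k + 1) := by
      have : x * (x ^ 3 + x ^ 2 + x + 1) + (k + 1) = (q + 1) * k := by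
        rw [hA'] at hk
        linear_combination hk
      rw [this]
      exact ((dvd_pow_self x (by norm_num)).trans hx3).mul_right k
    exact (Nat.dvd_add_right (Dvd.intro _ rfl)).1 h2
  have h1 : x ≤ k + 1 := Nat.le_of_dvd (by omega) hxk
  have h2 : 2 * x ^ 3 ≤ q + 1 := Nat.le_of_dvd (by omega)
    (Nat.Coprime.mul_dvd_of_dvd_of_dvd (Nat.coprime_two_left.2 hxo.pow)
      (even_iff_two_dvd.1 hqo.add_one) hx3)
  have h3 : (2 * x ^ 3 - 1) * (x - 1) ≤ q * k := Nat.mul_le_mul (by omega) (by omega)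
  rw [← hk, hA'] at h3
  obtain ⟨z, rfl⟩ := Nat.exists_eq_add_of_le hx6
  rw [show 6 + z - 1 = 5 + z by omega,
    show 2 * (6 + z) ^ 3 - 1 = 2 * z ^ 3 + 36 * z ^ 2 + 216 * z + 431 by
      rw [show 2 * (6 + z) ^ 3 = 2 * z ^ 3 + 36 * z ^ 2 + 216 * z + 432 by ring]; rfl] at h3
  ring_nf at h3
  nlinarith [Nat.zero_le (z ^ 2), Nat.zero_le (z ^ 3), Nat.zero_le (z ^ 4)]

theorem mul_pow_five_lt_of_dvd_geom_sum {q x y e f m A B C : ℕ} (hq : q.Prime) (hx : x.Prime)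
    (hy : y.Prime) (hqo : Odd q) (hxo : Odd x) (hyo : Odd y) (hxy : x ≠ y) (hxq : x < q)
    (hyq : y < q) (he : Even e) (he2 : 2 ≤ e) (hf : Even f) (hf2 : 2 ≤ f) (hm : 0 < m)
    (hC0 : 0 < C) (hA : A = ∑ i ∈ Finset.range (e + 1), x ^ i)
    (hB : B = ∑ i ∈ Finset.range (f + 1), y ^ i)
    (H : (q + 1) * A * B * C = 2 * (q * x ^ e * y ^ f * m))
    (hA2 : A ≤ 2 * x ^ e) (hB2 : B ≤ 2 * y ^ f) (hC2 : C ≤ 2 * m)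
    (hBC2 : B * C ≤ 2 * (y ^ f * m)) (hqA : q ∣ A) :
    q ^ 2 * (x * y) ^ 5 < 8 * (x ^ e * y ^ f * m) ^ 3 := by
  have hy3 : 3 ≤ y := by have := hy.two_le; obtain ⟨r, rfl⟩ := hyo; omega
  have hA0 : 0 < A := by rw [hA, geom_sum_succ]; omega
  have hB0 : 0 < B := by rw [hB, geom_sum_succ]; omega
  have hx0 := hx.pos
  have hy0 := hy.pos
  apply mul_pow_five_lt_of_sq_lt hx0 hy0 he2 hf2
  have hcases : e = 2 ∨ e = 4 ∨ 6 ≤ e := by obtain ⟨r, rfl⟩ := he; omega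
  rcases hcases with rfl | rfl | he6
  · have hA' : A = x ^ 2 + x + 1 := by
      rw [hA]; simp [Finset.sum_range_succ]; ring
    rw [hA'] at H hqA
    simpa using
      sq_lt_of_dvd_sq_add hq hx hy hxo hyo hxy hxq hyq hf hf2 hm hC0 hB H hB2 hC2 hqA
  · exact sq_lt_of_dvd_geom_sum_four hx hy3 hqo hxo hf2 hm hB0 hC0 hA H hA2 hBC2 hqA
  · obtain ⟨g, rfl⟩ := Nat.exists_eq_add_of_le he6
    have h1 : q ≤ 2 * x ^ (6 + g) := (Nat.le_of_dvd hA0 hqA).trans hA2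
    rw [show 6 + g - 2 = 4 + g by omega]
    have hpos : 0 < x ^ (12 + 2 * g) := by positivity
    have hone : 1 ≤ x ^ (1 + g) * (y * (y ^ (f - 2)) ^ 3) * m ^ 3 :=
      Nat.one_le_iff_ne_zero.2 (by positivity)
    calc q ^ 2 ≤ (2 * x ^ (6 + g)) ^ 2 := by gcongr
      _ = 4 * x ^ (12 + 2 * g) * 1 := by ring
      _ < 8 * x ^ (12 + 2 * g) * 1 := by omega
      _ ≤ 8 * x ^ (12 + 2 * g) * (x ^ (1 + g) * (y * (y ^ (f - 2)) ^ 3) * m ^ 3) := by gcongr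
      _ = _ := by ring

/-- The case where `q` is not the largest of the three primes: then `x ^ e` divides `B * C`. -/
theorem mul_pow_five_lt_of_lt {q x y e f m A B C : ℕ} (hx : x.Prime)
    (hqo : Odd q) (hxo : Odd x) (hqx : q < x) (hyx : y < x) (he2 : 2 ≤ e)
    (hBC0 : 0 < B * C) (hA : A = ∑ i ∈ Finset.range (e + 1), x ^ i)
    (H : (q + 1) * A * B * C = 2 * (q * x ^ e * y ^ f * m))
    (hBC2 : B * C ≤ 2 * (y ^ f * m)) :
    q ^ 2 * (x * y) ^ 5 < 8 * (x ^ e * y ^ f * m) ^ 3 := by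
  have hx0 := hx.pos
  have hnd : ¬ x ∣ q + 1 := by
    intro h
    have := Nat.le_of_dvd (by omega) h
    obtain ⟨r, rfl⟩ := hqo
    obtain ⟨s, rfl⟩ := hxo
    omega
  have hcA : Nat.Coprime x A := by rw [hA]; exact Nat.coprime_geom_sum x e
  have hd : x ^ e ∣ B * C := by
    have h1 : x ^ e ∣ ((q + 1) * A) * (B * C) := by
      refine ⟨2 * (q * y ^ f * m), ?_⟩
      linear_combination H
    exact (Nat.Coprime.pow_left e (Nat.Coprime.mul_right ((hx.coprime_iff_not_dvd).2 hnd)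
      hcA)).dvd_of_dvd_mul_left h1
  have hle : x ^ e ≤ 2 * (y ^ f * m) := (Nat.le_of_dvd hBC0 hd).trans hBC2
  have hxe : x ^ 2 ≤ x ^ e := Nat.pow_le_pow_right hx0 he2
  calc q ^ 2 * (x * y) ^ 5 < x ^ 2 * (x * x) ^ 5 := by gcongr
    _ = (x ^ 2) ^ 3 * (x ^ 2) ^ 3 := by ring
    _ ≤ (x ^ e) ^ 3 * (2 * (y ^ f * m)) ^ 3 := by gcongr; exact hxe.trans hle
    _ = _ := by ring

open ArithmeticFunction ArithmeticFunction.sigma in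
theorem Nat.Perfect.mul_pow_five_lt_of_coprime {q x y e f m : ℕ} (hq : q.Prime) (hx : x.Prime)
    (hy : y.Prime) (hqo : Odd q) (hxo : Odd x) (hyo : Odd y) (hqx : q ≠ x) (hqy : q ≠ y)
    (hxy : x ≠ y) (he : Even e) (he2 : 2 ≤ e) (hf : Even f) (hf2 : 2 ≤ f) (hm : 0 < m)
    (hqm : ¬ q ∣ m) (hxm : ¬ x ∣ m) (hym : ¬ y ∣ m)
    (hN : (q * x ^ e * y ^ f * m).Perfect) :
    (q * x * y) ^ 5 < 8 * (q * x ^ e * y ^ f * m) ^ 3 := by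
  have hcqx : q.Coprime x := (Nat.coprime_primes hq hx).2 hqx
  have hcqy : q.Coprime y := (Nat.coprime_primes hq hy).2 hqy
  have hcxy : x.Coprime y := (Nat.coprime_primes hx hy).2 hxy
  have hcqm : q.Coprime m := hq.coprime_iff_not_dvd.2 hqm
  have hcxm : x.Coprime m := hx.coprime_iff_not_dvd.2 hxm
  have hcym : y.Coprime m := hy.coprime_iff_not_dvd.2 hym
  have hσq : σ 1 q = q + 1 := by
    have := sigma_one_apply_prime_pow (i := 1) hq
    simpa [Finset.sum_range_succ, add_comm] using this
  have hσx := sigma_one_apply_prime_pow (i := e) hx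
  have hσy := sigma_one_apply_prime_pow (i := f) hy
  have hσym : σ 1 (y ^ f * m) = σ 1 (y ^ f) * σ 1 m :=
    isMultiplicative_sigma.map_mul_of_coprime (hcym.pow_left f)
  have hσxm : σ 1 (x ^ e * m) = σ 1 (x ^ e) * σ 1 m :=
    isMultiplicative_sigma.map_mul_of_coprime (hcxm.pow_left e)
  have H : (q + 1) * σ 1 (x ^ e) * σ 1 (y ^ f) * σ 1 m = 2 * (q * x ^ e * y ^ f * m) := by
    rw [← hN.sigma_one_eq,
      isMultiplicative_sigma.map_mul_of_coprime (m := q * x ^ e * y ^ f)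
        ((hcqm.mul_left (hcxm.pow_left e)).mul_left (hcym.pow_left f)),
      isMultiplicative_sigma.map_mul_of_coprime (m := q * x ^ e)
        ((hcqy.pow_right f).mul_left (hcxy.pow e f)),
      isMultiplicative_sigma.map_mul_of_coprime (hcqx.pow_right e), hσq]
  have hA2 := hN.sigma_one_le_of_dvd (d := x ^ e) ⟨q * y ^ f * m, by ring⟩
  have hB2 := hN.sigma_one_le_of_dvd (d := y ^ f) ⟨q * x ^ e * m, by ring⟩
  have hC2 := hN.sigma_one_le_of_dvd (d := m) ⟨q * x ^ e * y ^ f, by ring⟩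
  have hBC2 := hN.sigma_one_le_of_dvd (d := y ^ f * m) ⟨q * x ^ e, by ring⟩
  have hAC2 := hN.sigma_one_le_of_dvd (d := x ^ e * m) ⟨q * y ^ f, by ring⟩
  rw [hσym] at hBC2
  rw [hσxm] at hAC2
  have hA0 : 0 < σ 1 (x ^ e) := by rw [hσx, geom_sum_succ]; omega
  have hB0 : 0 < σ 1 (y ^ f) := by rw [hσy, geom_sum_succ]; omega
  have hx0 := hx.pos
  have hy0 := hy.pos
  have hq0 := hq.pos
  have hC0 : 0 < σ 1 m := by
    rcases Nat.eq_zero_or_pos (σ 1 m) with h | h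
    · rw [h, mul_zero] at H
      have : 0 < 2 * (q * x ^ e * y ^ f * m) := by positivity
      omega
    · exact h
  have H' : (q + 1) * σ 1 (y ^ f) * σ 1 (x ^ e) * σ 1 m = 2 * (q * y ^ f * x ^ e * m) := by
    linear_combination H
  suffices h : q ^ 2 * (x * y) ^ 5 < 8 * (x ^ e * y ^ f * m) ^ 3 by
    calc (q * x * y) ^ 5 = q ^ 3 * (q ^ 2 * (x * y) ^ 5) := by ring
      _ < q ^ 3 * (8 * (x ^ e * y ^ f * m) ^ 3) := by gcongr
      _ = _ := by ring
  have hswap : q ^ 2 * (y * x) ^ 5 < 8 * (y ^ f * x ^ e * m) ^ 3 →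
      q ^ 2 * (x * y) ^ 5 < 8 * (x ^ e * y ^ f * m) ^ 3 := by
    rw [mul_comm y x, mul_comm (y ^ f)]
    exact id
  by_cases hmax : x < q ∧ y < q
  · obtain ⟨hxq, hyq⟩ := hmax
    have hqd : q ∣ (q + 1) * σ 1 (x ^ e) * σ 1 (y ^ f) * σ 1 m := by
      rw [H]
      exact ⟨2 * (x ^ e * y ^ f * m), by ring⟩
    rcases hq.dvd_mul.1 hqd with h | h
    · rcases hq.dvd_mul.1 h with h | h
      · rcases hq.dvd_mul.1 h with h | h
        · have h1 := (Nat.dvd_add_right (dvd_refl q)).1 h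
          exact absurd (Nat.dvd_one.1 h1) hq.one_lt.ne'
        · exact mul_pow_five_lt_of_dvd_geom_sum hq hx hy hqo hxo hyo hxy hxq hyq he he2 hf hf2
            hm hC0 hσx hσy H hA2 hB2 hC2 hBC2 h
      · exact hswap (mul_pow_five_lt_of_dvd_geom_sum hq hy hx hqo hyo hxo hxy.symm hyq hxq hf hf2
          he he2 hm hC0 hσy hσx H' hB2 hA2 hC2 hAC2 h)
    · have h1 : q ≤ 2 * m := (Nat.le_of_dvd hC0 h).trans hC2
      apply mul_pow_five_lt_of_sq_lt hx0 hy0 he2 hf2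
      have hone : 1 ≤ x * (x ^ (e - 2)) ^ 3 * (y * (y ^ (f - 2)) ^ 3) :=
        Nat.one_le_iff_ne_zero.2 (by positivity)
      calc q ^ 2 ≤ (2 * m) ^ 2 := by gcongr
        _ = 4 * m ^ 2 := by ring
        _ < 8 * m ^ 2 := by gcongr; norm_num
        _ ≤ 8 * (1 * m ^ 3) := by rw [one_mul]; gcongr; omega
        _ ≤ _ := by gcongr
  · rcases lt_or_gt_of_ne hxy with h | h
    · exact hswap (mul_pow_five_lt_of_lt hy hqo hyo (by omega) h hf2 (by positivity) hσy H' hAC2)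
    · exact mul_pow_five_lt_of_lt hx hqo hxo (by omega) h he2 (by positivity) hσx H hBC2

open ArithmeticFunction ArithmeticFunction.sigma in
/-- At most one prime divides an odd perfect number to an odd power. -/
theorem Nat.Perfect.even_or_even_of_pow_mul_pow {x y d e n : ℕ} (hx : x.Prime) (hy : y.Prime)
    (hxy : x ≠ y) (hxn : ¬ x ∣ n) (hyn : ¬ y ∣ n)
    (hodd : Odd (x ^ d * y ^ e * n)) (hxo : Odd x) (hyo : Odd y)
    (hN : (x ^ d * y ^ e * n).Perfect) : Even d ∨ Even e := by
  by_contra! h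
  simp only [Nat.not_even_iff_odd] at h
  have hcxy : x.Coprime y := (Nat.coprime_primes hx hy).2 hxy
  have hs := hN.sigma_one_eq
  rw [isMultiplicative_sigma.map_mul_of_coprime (m := x ^ d * y ^ e)
      (((hx.coprime_iff_not_dvd.2 hxn).pow_left d).mul_left
        ((hy.coprime_iff_not_dvd.2 hyn).pow_left e)),
    isMultiplicative_sigma.map_mul_of_coprime (hcxy.pow d e),
    sigma_one_apply_prime_pow hx, sigma_one_apply_prime_pow hy] at hs
  have h4 : 2 * 2 ∣ 2 * (x ^ d * y ^ e * n) := by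
    rw [← hs]
    exact (mul_dvd_mul (Nat.two_dvd_geom_sum hxo h.1) (Nat.two_dvd_geom_sum hyo h.2)).mul_right _
  have h2 : 2 ∣ x ^ d * y ^ e * n := Nat.dvd_of_mul_dvd_mul_left (by norm_num) h4
  exact (Nat.not_even_iff_odd.2 hodd) (even_iff_two_dvd.2 h2)

/-- Any three distinct prime divisors of an odd perfect number `N` satisfy the bound. -/
theorem Nat.Perfect.mul_pow_five_lt {N a b c : ℕ} (hodd : Odd N) (hperf : N.Perfect)
    (ha : a.Prime) (hb : b.Prime) (hc : c.Prime) (haN : a ∣ N) (hbN : b ∣ N) (hcN : c ∣ N)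
    (hab : a ≠ b) (hac : a ≠ c) (hbc : b ≠ c) : (a * b * c) ^ 5 < 8 * N ^ 3 := by
  have hao := hodd.of_dvd_nat haN
  have hbo := hodd.of_dvd_nat hbN
  have hco := hodd.of_dvd_nat hcN
  obtain ⟨d, n, han, rfl⟩ := Nat.exists_eq_pow_mul_and_not_dvd hperf.2.ne' a ha.ne_one
  have hn0 : n ≠ 0 := by rintro rfl; simp at han
  obtain ⟨e, r, hbr, rfl⟩ := Nat.exists_eq_pow_mul_and_not_dvd hn0 b hb.ne_one
  have hr0 : r ≠ 0 := by rintro rfl; simp at hbr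
  obtain ⟨f, m, hcm, rfl⟩ := Nat.exists_eq_pow_mul_and_not_dvd hr0 c hc.ne_one
  have ham : ¬ a ∣ m := fun h => han ((h.mul_left _).mul_left _)
  have hbm : ¬ b ∣ m := fun h => hbr (h.mul_left _)
  have hm : 0 < m := Nat.pos_of_ne_zero (by rintro rfl; simp at hcm)
  have hnd : ∀ {p r k : ℕ}, p.Prime → r.Prime → p ≠ r → ¬ p ∣ r ^ k := fun hp hr hne h =>
    hne ((Nat.prime_dvd_prime_iff_eq hp hr).1 (hp.dvd_of_dvd_pow h))
  have hd : d ≠ 0 := by rintro rfl; exact han (by simpa using haN)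
  have he : e ≠ 0 := by
    rintro rfl
    rcases hb.dvd_mul.1 hbN with h | h
    · exact hnd hb ha hab.symm h
    · exact hbr (by simpa using h)
  have hf : f ≠ 0 := by
    rintro rfl
    rcases hc.dvd_mul.1 hcN with h | h
    · exact hnd hc ha hac.symm h
    · rcases hc.dvd_mul.1 h with h | h
      · exact hnd hc hb hbc.symm h
      · exact hcm (by simpa using h)
  have hN1 : a ^ d * (b ^ e * (c ^ f * m)) = a ^ d * b ^ e * (c ^ f * m) := by ring
  have hN2 : a ^ d * (b ^ e * (c ^ f * m)) = a ^ d * c ^ f * (b ^ e * m) := by ring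
  have hN3 : a ^ d * (b ^ e * (c ^ f * m)) = b ^ e * c ^ f * (a ^ d * m) := by ring
  have hnm : ∀ {p r k : ℕ}, p.Prime → r.Prime → p ≠ r → ¬ p ∣ m → ¬ p ∣ r ^ k * m :=
    fun hp hr hne hpm h => (hp.dvd_mul.1 h).elim (hnd hp hr hne) hpm
  have hde : Even d ∨ Even e := Nat.Perfect.even_or_even_of_pow_mul_pow ha hb hab
    (hnm ha hc hac ham) (hnm hb hc hbc hbm) (hN1 ▸ hodd) hao hbo (hN1 ▸ hperf)
  have hdf : Even d ∨ Even f := Nat.Perfect.even_or_even_of_pow_mul_pow ha hc hac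
    (hnm ha hb hab ham) (hnm hc hb hbc.symm hcm) (hN2 ▸ hodd) hao hco (hN2 ▸ hperf)
  have hef : Even e ∨ Even f := Nat.Perfect.even_or_even_of_pow_mul_pow hb hc hbc
    (hnm hb ha hab.symm hbm) (hnm hc ha hac.symm hcm) (hN3 ▸ hodd) hbo hco (hN3 ▸ hperf)
  have htwo : ∀ {k : ℕ}, k ≠ 0 → k ≠ 1 → 2 ≤ k := by omega
  have heven : ∀ {k : ℕ}, k ≠ 0 → Even k → 2 ≤ k := by
    rintro k h0 ⟨r, rfl⟩
    omega
  by_cases hd1 : d = 1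
  · subst hd1
    have he' : Even e := hde.resolve_left (by decide)
    have hf' : Even f := hdf.resolve_left (by decide)
    have hN : a ^ 1 * (b ^ e * (c ^ f * m)) = a * b ^ e * c ^ f * m := by ring
    rw [hN] at hperf ⊢
    exact hperf.mul_pow_five_lt_of_coprime ha hb hc hao hbo hco hab hac hbc he' (heven he he')
      hf' (heven hf hf') hm ham hbm hcm
  by_cases he1 : e = 1
  · subst he1
    have hd' : Even d := hde.resolve_right (by decide)
    have hf' : Even f := hef.resolve_left (by decide)
    have hN : a ^ d * (b ^ 1 * (c ^ f * m)) = b * a ^ d * c ^ f * m := by ring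
    rw [hN] at hperf ⊢
    rw [mul_comm a b]
    exact hperf.mul_pow_five_lt_of_coprime hb ha hc hbo hao hco hab.symm hbc hac hd' (heven hd hd')
      hf' (heven hf hf') hm hbm ham hcm
  by_cases hf1 : f = 1
  · subst hf1
    have hd' : Even d := hdf.resolve_right (by decide)
    have he' : Even e := hef.resolve_right (by decide)
    have hN : a ^ d * (b ^ e * (c ^ 1 * m)) = c * a ^ d * b ^ e * m := by ring
    rw [hN] at hperf ⊢
    rw [show a * b * c = c * a * b by ring]
    exact hperf.mul_pow_five_lt_of_coprime hc ha hb hco hao hbo hac.symm hbc.symm hab hd'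
      (heven hd hd') he' (heven he he') hm hcm ham hbm
  have ha0 := ha.pos
  have hb0 := hb.pos
  have hc0 := hc.pos
  have hpos : 0 < (a * b * c) ^ 6 := by positivity
  calc (a * b * c) ^ 5 ≤ (a * b * c) ^ 6 := Nat.pow_le_pow_right (by positivity) (by norm_num)
    _ < 8 * (a * b * c) ^ 6 := by omega
    _ = 8 * (a ^ 2 * (b ^ 2 * (c ^ 2 * 1))) ^ 3 := by ring
    _ ≤ 8 * (a ^ d * (b ^ e * (c ^ f * m))) ^ 3 := by
      gcongr
      exacts [htwo hd hd1, htwo he he1, htwo hf hf1, hm]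

/-- Let N be an odd perfect number with at least three distinct
prime divisors, with c, b, a its largest, second largest and third largest
prime divisors respectively. Then (abc)^5 < (2N)^3. -/
theorem stmt_2 (N : ℕ) (hodd : Odd N) (hperf : Nat.Perfect N)
    (hk : 3 ≤ N.primeFactors.card)
    (a b c : ℕ)
    (ha : a ∈ N.primeFactors) (hb : b ∈ N.primeFactors) (hc : c ∈ N.primeFactors)
    (ha2 : (N.primeFactors.filter (fun q => a < q)).card = 2)
    (hb1 : (N.primeFactors.filter (fun q => b < q)).card = 1)
    (hc0 : (N.primeFactors.filter (fun q => c < q)).card = 0) :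
    (a * b * c) ^ 5 < (2 * N) ^ 3 := by
  have hab : a ≠ b := by rintro rfl; omega
  have hac : a ≠ c := by rintro rfl; omega
  have hbc : b ≠ c := by rintro rfl; omega
  calc (a * b * c) ^ 5 < 8 * N ^ 3 := hperf.mul_pow_five_lt hodd
        (Nat.prime_of_mem_primeFactors ha) (Nat.prime_of_mem_primeFactors hb)
        (Nat.prime_of_mem_primeFactors hc) (Nat.dvd_of_mem_primeFactors ha)
        (Nat.dvd_of_mem_primeFactors hb) (Nat.dvd_of_mem_primeFactors hc) hab hac hbc
    _ = (2 * N) ^ 3 := by ring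
end

section
/- Let N be an odd perfect number with at least three distinct prime divisors, let c be its largest prime divisor, b its second largest prime divisor, and a its third largest prime divisor. Then abc < 2^(5/12) · 3^(7/36) · N^(11/18). -/
open Finset

/-- The logarithmic form of `abc < 2^(5/12) · 3^(7/36) · N^(11/18)`. -/
def LogBound (a b c N : ℕ) : Prop :=
  36 * (Real.log a + Real.log b + Real.log c) <
    15 * Real.log 2 + 7 * Real.log 3 + 22 * Real.log N

lemma LogBound.lt {a b c N : ℕ} (ha : 0 < a) (hb : 0 < b) (hc : 0 < c) (hN : 0 < N)
    (h : LogBound a b c N) :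
    (a * b * c : ℝ) < (2 : ℝ) ^ ((5 : ℝ) / 12) * (3 : ℝ) ^ ((7 : ℝ) / 36) *
      (N : ℝ) ^ ((11 : ℝ) / 18) := by
  unfold LogBound at h
  rw [← Real.log_lt_log_iff (by positivity) (by positivity)]
  simp (disch := positivity) only [Real.log_mul, Real.log_rpow]
  linarith

lemma log_le_log_of_nat_le {x y : ℕ} (hx : 0 < x) (h : x ≤ y) :
    Real.log (x : ℝ) ≤ Real.log (y : ℝ) :=
  Real.log_le_log (by exact_mod_cast hx) (by exact_mod_cast h)

lemma three_mul_log_two_le : 3 * Real.log 2 ≤ 2 * Real.log 3 := by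
  have h := log_le_log_of_nat_le (x := 2 ^ 3) (y := 3 ^ 2) (by norm_num) (by norm_num)
  simpa only [Nat.cast_pow, Real.log_pow, Nat.cast_ofNat] using h

lemma log_three_le : Real.log 3 ≤ 2 * Real.log 2 := by
  have h := log_le_log_of_nat_le (x := 3) (y := 2 ^ 2) (by norm_num) (by norm_num)
  simpa only [Nat.cast_pow, Real.log_pow, Nat.cast_ofNat] using h

lemma log_two_pos : 0 < Real.log 2 := Real.log_pos (by norm_num)

section Sigma

variable {N : ℕ}

lemma prod_geom_sum_eq_two_mul (hN : 0 < N) (hperf : Nat.Perfect N) :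
    ∏ p ∈ N.primeFactors, ∑ i ∈ range (N.factorization p + 1), p ^ i = 2 * N := by
  rw [← (Nat.perfect_iff_sum_divisors_eq_two_mul hN).1 hperf,
    ← ArithmeticFunction.sigma_one_apply,
    ArithmeticFunction.isMultiplicative_sigma.multiplicative_factorization _ hN.ne',
    Finsupp.prod, Nat.support_factorization]
  exact prod_congr rfl fun p hp =>
    (ArithmeticFunction.sigma_one_apply_prime_pow (Nat.prime_of_mem_primeFactors hp)).symm

lemma geom_sum_dvd_two_mul (hN : 0 < N) (hperf : Nat.Perfect N) {p : ℕ}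
    (hp : p ∈ N.primeFactors) :
    ∑ i ∈ range (N.factorization p + 1), p ^ i ∣ 2 * N :=
  prod_geom_sum_eq_two_mul hN hperf ▸ dvd_prod_of_mem _ hp

lemma even_geom_sum {p k : ℕ} (hp : Odd p) (hk : Odd k) : 2 ∣ ∑ i ∈ range (k + 1), p ^ i := by
  rw [← even_iff_two_dvd, Finset.even_sum_iff_even_card_odd]
  rw [filter_true_of_mem fun i _ => hp.pow, card_range]
  exact hk.add_one

lemma not_odd_factorization_of_ne (hodd : Odd N) (hperf : Nat.Perfect N) {p q : ℕ}
    (hp : p ∈ N.primeFactors) (hq : q ∈ N.primeFactors) (hpq : p ≠ q)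
    (hpo : Odd (N.factorization p)) : Even (N.factorization q) := by
  by_contra hqo
  rw [Nat.not_even_iff_odd] at hqo
  have h : ∏ r ∈ {p, q}, ∑ i ∈ range (N.factorization r + 1), r ^ i ∣ 2 * N := by
    rw [← prod_geom_sum_eq_two_mul hodd.pos hperf]
    exact prod_dvd_prod_of_subset _ _ _ (by simp [insert_subset_iff, hp, hq])
  rw [prod_pair hpq] at h
  have h4 : 2 * 2 ∣ 2 * N := dvd_trans (mul_dvd_mul
    (even_geom_sum (hodd.of_dvd_nat (Nat.dvd_of_mem_primeFactors hp)) hpo)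
    (even_geom_sum (hodd.of_dvd_nat (Nat.dvd_of_mem_primeFactors hq)) hqo)) h
  obtain ⟨t, rfl⟩ := hodd
  omega

lemma exists_dvd_geom_sum (hodd : Odd N) (hperf : Nat.Perfect N) {c : ℕ}
    (hc : c ∈ N.primeFactors) (h1 : N.factorization c = 1) :
    ∃ p ∈ N.primeFactors, p ≠ c ∧ c ∣ ∑ i ∈ range (N.factorization p + 1), p ^ i := by
  have hcp := Nat.prime_of_mem_primeFactors hc
  have h : c ∣ ∏ p ∈ N.primeFactors, ∑ i ∈ range (N.factorization p + 1), p ^ i := by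
    rw [prod_geom_sum_eq_two_mul hodd.pos hperf]
    exact (Nat.dvd_of_mem_primeFactors hc).mul_left 2
  obtain ⟨p, hp, hcd⟩ := hcp.prime.exists_mem_finset_dvd h
  refine ⟨p, hp, ?_, hcd⟩
  rintro rfl
  rw [h1] at hcd
  simp only [sum_range_succ, range_zero, sum_empty, pow_zero, pow_one, zero_add] at hcd
  exact hcp.one_lt.ne' (Nat.dvd_one.1 ((Nat.dvd_add_left dvd_rfl).1 hcd))

lemma sq_add_self_add_one_dvd (hodd : Odd N) (hperf : Nat.Perfect N) {p : ℕ}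
    (hp : p ∈ N.primeFactors) (h2 : N.factorization p = 2) : p ^ 2 + p + 1 ∣ N := by
  have h := geom_sum_dvd_two_mul hodd.pos hperf hp
  simp only [h2, sum_range_succ, range_zero, sum_empty, pow_zero, pow_one, zero_add] at h
  rw [show 1 + p + p ^ 2 = p ^ 2 + p + 1 by ring] at h
  have hpo : Odd (p ^ 2 + p + 1) := by
    have := hodd.of_dvd_nat (Nat.dvd_of_mem_primeFactors hp)
    exact (this.pow.add_odd this).add_one
  exact (Nat.coprime_two_right.2 hpo).dvd_of_dvd_mul_left h

lemma exists_add_one_eq_two_mul (hodd : Odd N) (hperf : Nat.Perfect N) {p : ℕ}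
    (hp : p ∈ N.primeFactors) (h1 : N.factorization p = 1) :
    ∃ d, p + 1 = 2 * d ∧ d ∣ N := by
  have h := geom_sum_dvd_two_mul hodd.pos hperf hp
  simp only [h1, sum_range_succ, range_zero, sum_empty, pow_zero, pow_one, zero_add] at h
  obtain ⟨d, hd⟩ := hodd.of_dvd_nat (Nat.dvd_of_mem_primeFactors hp)
  refine ⟨d + 1, by omega, ?_⟩
  rw [show 1 + p = 2 * (d + 1) by omega] at h
  exact Nat.dvd_of_mul_dvd_mul_left two_pos h

end Sigma

lemma mul_dvd_of_not_sq_dvd {a d M : ℕ} (ha : a.Prime) (haM : a ^ 2 ∣ M) (hd : d ∣ M)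
    (h : ¬ a ^ 2 ∣ d) : a * d ∣ M := by
  by_cases had : a ∣ d
  · obtain ⟨e, rfl⟩ := had
    have hae : ¬ a ∣ e := fun ⟨f, hf⟩ => h ⟨f, by rw [hf]; ring⟩
    have := (((Nat.Prime.coprime_iff_not_dvd ha).2 hae).pow_left 2).mul_dvd_of_dvd_of_dvd haM
      ((Dvd.intro_left a rfl).trans hd)
    convert this using 1
    ring
  · exact ((Nat.Prime.coprime_iff_not_dvd ha).2 had).mul_dvd_of_dvd_of_dvd
      ((dvd_pow_self a two_ne_zero).trans haM) hd

/-- If `c ∣ σ(p ^ k)` and `(c + 1) / 2` and `p ^ k` divide `R`, where `p ^ k` is the exact power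
of `p` in `R`, then `R` is of size at least `c ^ 2 / (2 * p)`. -/
lemma sq_lt_of_dvd_geom_sum {c p k d R : ℕ} (hp : p.Prime) (hp3 : 3 ≤ p) (hR : 0 < R)
    (hcd : c + 1 = 2 * d) (hdR : d ∣ R) (hpR : p ^ k ∣ R) (hpR' : ¬ p ^ (k + 1) ∣ R)
    (h : c ∣ ∑ i ∈ range (k + 1), p ^ i) : c ^ 2 < 2 * p * R := by
  obtain ⟨m, hm⟩ := h
  obtain ⟨q, rfl⟩ : ∃ q, p = q + 1 := ⟨p - 1, by omega⟩
  have hgeom := geom_sum_mul_add q (k + 1)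
  rw [hm] at hgeom
  have hm0 : 0 < m := by
    rcases Nat.eq_zero_or_pos m with rfl | h
    · have : 1 < (q + 1) ^ (k + 1) := Nat.one_lt_pow (by omega) (by omega)
      simp only [mul_zero, zero_mul, zero_add] at hgeom
      omega
    · exact h
  have hd0 : d ≠ 0 := by omega
  obtain ⟨j, v, hv, hdv⟩ := Nat.exists_eq_pow_mul_and_not_dvd hd0 (q + 1) (by omega)
  have hvR : (q + 1) ^ k * v ∣ R :=
    (((Nat.Prime.coprime_iff_not_dvd hp).2 hv).pow_left k).mul_dvd_of_dvd_of_dvd hpR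
      ((Dvd.intro_left _ hdv.symm).trans hdR)
  have hjk : j ≤ k := by
    by_contra hlt
    exact hpR' (((pow_dvd_pow _ (by omega)).trans (Dvd.intro v hdv.symm)).trans hdR)
  have hqm : 2 ≤ q * m := by nlinarith
  have hj : (q + 1) ^ j ≤ q * m - 1 := by
    apply Nat.le_of_dvd (by omega)
    have e : q * m * (c + 1) = (q + 1) ^ (k + 1) + (q * m - 1) := by
      zify [show 1 ≤ q * m by omega] at hgeom ⊢
      linear_combination hgeom
    have h1 : (q + 1) ^ j ∣ q * m * (c + 1) := by
      rw [hcd, hdv]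
      exact Dvd.intro (q * m * 2 * v) (by ring)
    rw [e] at h1
    exact (Nat.dvd_add_right (pow_dvd_pow _ (by omega))).1 h1
  have hle := Nat.le_of_dvd hR hvR
  have hv0 : 0 < v := Nat.pos_of_ne_zero fun h => hv (h ▸ dvd_zero _)
  calc c ^ 2 < c * (c + 1) + 1 := by nlinarith
    _ = 2 * c * ((q + 1) ^ j * v) + 1 := by rw [hcd, hdv]; ring
    _ ≤ 2 * c * (q * m * v) + 1 := by gcongr; omega
    _ ≤ 2 * v * (c * m * q + 1) := by nlinarith
    _ = 2 * (q + 1) * ((q + 1) ^ k * v) := by rw [hgeom]; ring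
    _ ≤ 2 * (q + 1) * R := by gcongr

/-- A prime power is at least two thirds of each divisor of its divisor sum. -/
lemma two_mul_le_of_dvd_geom_sum {c p k : ℕ} (hp3 : 3 ≤ p)
    (h : c ∣ ∑ i ∈ range (k + 1), p ^ i) : 2 * c ≤ 3 * p ^ k := by
  obtain ⟨q, rfl⟩ : ∃ q, p = q + 1 := ⟨p - 1, by omega⟩
  have hgeom := geom_sum_mul_add q (k + 1)
  have hpos : 0 < ∑ i ∈ range (k + 1), (q + 1) ^ i := by
    rw [sum_range_succ]; positivity
  have hle := Nat.le_of_dvd hpos h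
  rw [pow_succ] at hgeom
  have : 0 < (q + 1) ^ k := by positivity
  nlinarith

lemma logBound_of_mul_sq_mul_sq_le {a b c N : ℕ}
    (ha : 0 < a) (hab : a ≤ b) (hbc : b ≤ c)
    (h1 : a * b ^ 2 * c ^ 2 ≤ N) :
    LogBound a b c N := by
  have hb : 0 < b := by omega
  have hc : 0 < c := by omega
  have hN : 0 < N := lt_of_lt_of_le (by positivity) h1
  have la := Real.log_natCast_nonneg a
  have lab := log_le_log_of_nat_le ha hab
  have lbc := log_le_log_of_nat_le hb hbc
  have l1 := log_le_log_of_nat_le (by positivity) h1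
  simp (disch := positivity) only [LogBound, Nat.cast_mul, Nat.cast_pow, Nat.cast_ofNat,
    Real.log_mul, Real.log_pow] at *
  linarith [three_mul_log_two_le, log_three_le, log_two_pos]

lemma logBound_of_sq_mul_mul_pow_four_le {a b c N : ℕ}
    (ha : 0 < a) (hab : a ≤ b) (hbc : b ≤ c)
    (h1 : a ^ 2 * b * c ^ 4 ≤ N) :
    LogBound a b c N := by
  have hb : 0 < b := by omega
  have hc : 0 < c := by omega
  have hN : 0 < N := lt_of_lt_of_le (by positivity) h1
  have la := Real.log_natCast_nonneg a
  have lab := log_le_log_of_nat_le ha hab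
  have lbc := log_le_log_of_nat_le hb hbc
  have l1 := log_le_log_of_nat_le (by positivity) h1
  simp (disch := positivity) only [LogBound, Nat.cast_mul, Nat.cast_pow, Nat.cast_ofNat,
    Real.log_mul, Real.log_pow] at *
  linarith [three_mul_log_two_le, log_three_le, log_two_pos]

lemma logBound_of_mul_le_two_mul_cofactor {a b c M : ℕ}
    (ha : 0 < a) (hab : a ≤ b) (hbc : b ≤ c) (hM : 0 < M)
    (h1 : a * b ≤ 2 * M) :
    LogBound a b c (b * (c ^ 2 * M)) := by
  have hb : 0 < b := by omega
  have hc : 0 < c := by omega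
  have la := Real.log_natCast_nonneg a
  have lab := log_le_log_of_nat_le ha hab
  have lbc := log_le_log_of_nat_le hb hbc
  have l1 := log_le_log_of_nat_le (by positivity) h1
  simp (disch := positivity) only [LogBound, Nat.cast_mul, Nat.cast_pow, Nat.cast_ofNat,
    Real.log_mul, Real.log_pow] at *
  linarith [three_mul_log_two_le, log_three_le, log_two_pos]

lemma logBound_of_pow_four_le_cofactor {a b c M : ℕ}
    (ha : 0 < a) (hab : a ≤ b) (hbc : b ≤ c) (hM : 0 < M)
    (h1 : a ^ 4 ≤ M) (h2 : c ≤ M) :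
    LogBound a b c (b * (c ^ 2 * M)) := by
  have hb : 0 < b := by omega
  have hc : 0 < c := by omega
  have la := Real.log_natCast_nonneg a
  have lab := log_le_log_of_nat_le ha hab
  have lbc := log_le_log_of_nat_le hb hbc
  have l1 := log_le_log_of_nat_le (by positivity) h1
  have l2 := log_le_log_of_nat_le (by positivity) h2
  simp (disch := positivity) only [LogBound, Nat.cast_mul, Nat.cast_pow, Nat.cast_ofNat,
    Real.log_mul, Real.log_pow] at *
  linarith [three_mul_log_two_le, log_three_le, log_two_pos]

lemma logBound_of_two_mul_sq_mul_sq_le {a b c R : ℕ}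
    (ha : 0 < a) (hab : a ≤ b) (hbc : b ≤ c) (hR : 0 < R)
    (h1 : 2 * c * (a ^ 2 * b ^ 2) ≤ 3 * R) :
    LogBound a b c (c * R) := by
  have hb : 0 < b := by omega
  have hc : 0 < c := by omega
  have la := Real.log_natCast_nonneg a
  have lab := log_le_log_of_nat_le ha hab
  have lbc := log_le_log_of_nat_le hb hbc
  have l1 := log_le_log_of_nat_le (by positivity) h1
  simp (disch := positivity) only [LogBound, Nat.cast_mul, Nat.cast_pow, Nat.cast_ofNat,
    Real.log_mul, Real.log_pow] at *
  linarith [three_mul_log_two_le, log_three_le, log_two_pos]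

lemma logBound_of_sq_le_of_sq_mul_pow_four_le {a b c R : ℕ}
    (ha : 0 < a) (hab : a ≤ b) (hbc : b ≤ c) (hR : 0 < R)
    (h1 : c ^ 2 ≤ 2 * b * R) (h2 : a ^ 2 * b ^ 4 ≤ R) :
    LogBound a b c (c * R) := by
  have hb : 0 < b := by omega
  have hc : 0 < c := by omega
  have la := Real.log_natCast_nonneg a
  have lab := log_le_log_of_nat_le ha hab
  have lbc := log_le_log_of_nat_le hb hbc
  have l1 := log_le_log_of_nat_le (by positivity) h1
  have l2 := log_le_log_of_nat_le (by positivity) h2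
  simp (disch := positivity) only [LogBound, Nat.cast_mul, Nat.cast_pow, Nat.cast_ofNat,
    Real.log_mul, Real.log_pow] at *
  linarith [three_mul_log_two_le, log_three_le, log_two_pos]

lemma logBound_of_sq_le_of_pow_four_mul_sq_le {a b c R : ℕ}
    (ha : 0 < a) (hab : a ≤ b) (hbc : b ≤ c) (hR : 0 < R)
    (h1 : c ^ 2 ≤ 2 * a * R) (h2 : a ^ 4 * b ^ 2 ≤ R) (h3 : b ^ 4 ≤ R) :
    LogBound a b c (c * R) := by
  have hb : 0 < b := by omega
  have hc : 0 < c := by omega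
  have la := Real.log_natCast_nonneg a
  have lab := log_le_log_of_nat_le ha hab
  have lbc := log_le_log_of_nat_le hb hbc
  have l1 := log_le_log_of_nat_le (by positivity) h1
  have l2 := log_le_log_of_nat_le (by positivity) h2
  have l3 := log_le_log_of_nat_le (by positivity) h3
  simp (disch := positivity) only [LogBound, Nat.cast_mul, Nat.cast_pow, Nat.cast_ofNat,
    Real.log_mul, Real.log_pow] at *
  linarith [three_mul_log_two_le, log_three_le, log_two_pos]

lemma logBound_of_sq_mul_mul_le_of_pow_four_le {a b c R : ℕ}
    (ha : 0 < a) (hab : a ≤ b) (hbc : b ≤ c) (hR : 0 < R)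
    (h1 : a ^ 2 * b * c ≤ 2 * R) (h2 : b ^ 4 ≤ R) :
    LogBound a b c (c * R) := by
  have hb : 0 < b := by omega
  have hc : 0 < c := by omega
  have la := Real.log_natCast_nonneg a
  have lab := log_le_log_of_nat_le ha hab
  have lbc := log_le_log_of_nat_le hb hbc
  have l1 := log_le_log_of_nat_le (by positivity) h1
  have l2 := log_le_log_of_nat_le (by positivity) h2
  simp (disch := positivity) only [LogBound, Nat.cast_mul, Nat.cast_pow, Nat.cast_ofNat,
    Real.log_mul, Real.log_pow] at *
  linarith [three_mul_log_two_le, log_three_le, log_two_pos]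

lemma logBound_of_mul_le_of_sq_le {a b c T : ℕ}
    (ha : 0 < a) (hab : a ≤ b) (hbc : b ≤ c) (hT : 0 < T)
    (h1 : a * c ≤ 2 * T) (h2 : a ^ 2 ≤ T) :
    LogBound a b c (c * (b ^ 2 * T)) := by
  have hb : 0 < b := by omega
  have hc : 0 < c := by omega
  have la := Real.log_natCast_nonneg a
  have lab := log_le_log_of_nat_le ha hab
  have lbc := log_le_log_of_nat_le hb hbc
  have l1 := log_le_log_of_nat_le (by positivity) h1
  have l2 := log_le_log_of_nat_le (by positivity) h2
  simp (disch := positivity) only [LogBound, Nat.cast_mul, Nat.cast_pow, Nat.cast_ofNat,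
    Real.log_mul, Real.log_pow] at *
  linarith [three_mul_log_two_le, log_three_le, log_two_pos]

lemma logBound_of_le_of_pow_four_le {a b c T : ℕ}
    (ha : 0 < a) (hab : a ≤ b) (hbc : b ≤ c) (hT : 0 < T)
    (h1 : c ≤ 2 * T) (h2 : a ^ 4 ≤ T) :
    LogBound a b c (c * (b ^ 2 * T)) := by
  have hb : 0 < b := by omega
  have hc : 0 < c := by omega
  have la := Real.log_natCast_nonneg a
  have lab := log_le_log_of_nat_le ha hab
  have lbc := log_le_log_of_nat_le hb hbc
  have l1 := log_le_log_of_nat_le (by positivity) h1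
  have l2 := log_le_log_of_nat_le (by positivity) h2
  simp (disch := positivity) only [LogBound, Nat.cast_mul, Nat.cast_pow, Nat.cast_ofNat,
    Real.log_mul, Real.log_pow] at *
  linarith [three_mul_log_two_le, log_three_le, log_two_pos]

lemma logBound_of_le_four_mul_sq {a b c T : ℕ}
    (ha : 0 < a) (hab : a ≤ b) (hbc : b ≤ c) (hT : 0 < T)
    (h1 : c ≤ 2 ^ 2 * a ^ 2) (h2 : c ≤ 2 * T) (h3 : a ^ 4 ≤ b * T) (h4 : a ^ 10 ≤ c * T ^ 3) :
    LogBound a b c (c * (b ^ 2 * T)) := by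
  have hb : 0 < b := by omega
  have hc : 0 < c := by omega
  have la := Real.log_natCast_nonneg a
  have lab := log_le_log_of_nat_le ha hab
  have lbc := log_le_log_of_nat_le hb hbc
  have l1 := log_le_log_of_nat_le (by positivity) h1
  have l2 := log_le_log_of_nat_le (by positivity) h2
  have l3 := log_le_log_of_nat_le (by positivity) h3
  have l4 := log_le_log_of_nat_le (by positivity) h4
  simp (disch := positivity) only [LogBound, Nat.cast_mul, Nat.cast_pow, Nat.cast_ofNat,
    Real.log_mul, Real.log_pow] at *
  linarith [three_mul_log_two_le, log_three_le, log_two_pos]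

lemma logBound_of_le_four_mul_sq_of_le {a b c T n : ℕ}
    (ha : 0 < a) (hab : a ≤ b) (hbc : b ≤ c) (hT : 0 < T) (hn : 3 ≤ n)
    (h1 : c ≤ 2 ^ 2 * a ^ 2) (h2 : a ≤ 2 * n ^ 2) (h3 : a ^ 4 ≤ b * T) (h4 : a ^ 2 * n ≤ T) :
    LogBound a b c (c * (b ^ 2 * T)) := by
  have hb : 0 < b := by omega
  have hc : 0 < c := by omega
  have hn0 : 0 < n := by omega
  have la := Real.log_natCast_nonneg a
  have lab := log_le_log_of_nat_le ha hab
  have lbc := log_le_log_of_nat_le hb hbc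
  have ln := log_le_log_of_nat_le three_pos hn
  have l1 := log_le_log_of_nat_le (by positivity) h1
  have l2 := log_le_log_of_nat_le (by positivity) h2
  have l3 := log_le_log_of_nat_le (by positivity) h3
  have l4 := log_le_log_of_nat_le (by positivity) h4
  simp (disch := positivity) only [LogBound, Nat.cast_mul, Nat.cast_pow, Nat.cast_ofNat,
    Real.log_mul, Real.log_pow] at *
  linarith [three_mul_log_two_le, log_three_le, log_two_pos]

lemma dvd_of_dvd_mul_sq_mul {x p q T : ℕ} (hp : p.Prime) (hq : q.Prime) (hpx : ¬ p ∣ x)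
    (hqx : ¬ q ∣ x) (h : x ∣ p * (q ^ 2 * T)) : x ∣ T :=
  ((((Nat.Prime.coprime_iff_not_dvd hq).2 hqx).pow_left 2).symm).dvd_of_dvd_mul_left
    ((((Nat.Prime.coprime_iff_not_dvd hp).2 hpx).symm).dvd_of_dvd_mul_left h)

lemma not_dvd_sq_add_self_add_one {p : ℕ} (hp : p.Prime) : ¬ p ∣ p ^ 2 + p + 1 := by
  intro h
  have h1 : p ∣ p ^ 2 + p := ⟨p + 1, by ring⟩
  exact hp.one_lt.ne' (Nat.dvd_one.1 ((Nat.dvd_add_right h1).1 h))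

lemma odd_sq_add_self_add_one (p : ℕ) : Odd (p ^ 2 + p + 1) := by
  rw [show p ^ 2 + p = p * (p + 1) by ring]
  exact (Nat.even_mul_succ_self p).add_one

lemma not_dvd_add_one_of_dvd {p c : ℕ} (hp : Odd p) (hp3 : 3 ≤ p) (hpc : p < c)
    (h : c ∣ p ^ 2 + p + 1) : ¬ p ∣ c + 1 := by
  intro hpd
  obtain ⟨m, hm⟩ := h
  have hmo : Odd m := by
    have := odd_sq_add_self_add_one p
    rw [hm] at this
    exact (Nat.odd_mul.1 this).2
  have h1 : p ∣ m + 1 := by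
    have h2 : p ∣ (p ^ 2 + p) + (m + 1) := by
      rw [show (p ^ 2 + p) + (m + 1) = (c + 1) * m by linarith]
      exact hpd.mul_right m
    exact (Nat.dvd_add_right ⟨p + 1, by ring⟩).1 h2
  have h2 : 2 * p ∣ m + 1 :=
    (Nat.coprime_two_left.2 hp).mul_dvd_of_dvd_of_dvd hmo.add_one.two_dvd h1
  have := Nat.le_of_dvd (by omega) h2
  nlinarith

lemma cycle_identity {a b c m n u : ℕ} (hbn : b * n = a ^ 2 + a + 1)
    (hcm : c * m = b ^ 2 + b + 1) (hcu : c + 1 = 2 * a ^ 2 * u) :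
    n ^ 2 * (m + 1) + n * (a + 1) + 2 * a + 1 + a ^ 2 * (a ^ 2 + 2 * a + 3 + n) =
      a ^ 2 * (2 * u * m * n ^ 2) := by
  zify at *
  linear_combination (m * n ^ 2 : ℤ) * hcu - (n ^ 2 : ℤ) * hcm -
    (b * n + a ^ 2 + a + 1 + n : ℤ) * hbn

set_option synthInstance.maxSize 1024 in
set_option synthInstance.maxHeartbeats 200000 in
lemma no_small_cycle : ∀ a < 24, 3 ≤ a → a % 2 = 1 → ∀ n < a, (a ^ 2 + a + 1) % n = 0 →
    ∀ m < a ^ 2 + 1,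
      ((((a ^ 2 + a + 1) / n) ^ 2 + (a ^ 2 + a + 1) / n + 1) / m + 1) % (2 * a ^ 2) = 0 →
      (((a ^ 2 + a + 1) / n) ^ 2 + (a ^ 2 + a + 1) / n + 1) % m ≠ 0 := by
  decide +kernel

lemma cycle_le_two {a b c m n u : ℕ} (ha : Odd a) (ha3 : 3 ≤ a) (hna : n < a)
    (hbn : b * n = a ^ 2 + a + 1) (hcm : c * m = b ^ 2 + b + 1) (hcu : c + 1 = 2 * a ^ 2 * u) :
    u ≤ 2 := by
  by_contra! hu
  have hn0 : 0 < n := Nat.pos_of_ne_zero (by rintro rfl; simp at hbn)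
  have hm0 : 0 < m := Nat.pos_of_ne_zero (by rintro rfl; simp at hcm)
  have hc0 : 0 < c := Nat.pos_of_ne_zero (by rintro rfl; simp at hcm)
  have hid := cycle_identity hbn hcm hcu
  obtain ⟨y, hy⟩ : ∃ y, 2 * u * m * n ^ 2 = a ^ 2 + 2 * a + 3 + n + y := by
    refine Nat.exists_eq_add_of_le (le_of_mul_le_mul_left (a := a ^ 2) ?_ (by positivity))
    omega
  rw [hy] at hid
  have hid' : m * n ^ 2 + n ^ 2 + n * (a + 1) + 2 * a + 1 = a ^ 2 * y := by linarith
  have hx : 6 * (m * n ^ 2) ≤ a ^ 2 + 2 * a + 3 + n + y := by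
    rw [← hy]
    calc 6 * (m * n ^ 2) = 2 * 3 * m * n ^ 2 := by ring
      _ ≤ 2 * u * m * n ^ 2 := by gcongr; omega
  have hnx : n ^ 2 ≤ m * n ^ 2 := Nat.le_mul_of_pos_left _ hm0
  rcases lt_or_ge a 24 with ha24 | ha24
  · have hb : b = (a ^ 2 + a + 1) / n := by rw [← hbn, Nat.mul_div_cancel _ hn0]
    have hc : c = (b ^ 2 + b + 1) / m := by rw [← hcm, Nat.mul_div_cancel _ hm0]
    have hma : m < a ^ 2 + 1 := by
      have hb' : b ≤ a ^ 2 + a + 1 := by rw [← hbn]; exact Nat.le_mul_of_pos_right _ hn0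
      by_contra! h
      have h1 : 6 * a ^ 2 ≤ c + 1 := by nlinarith
      have h2 : (a ^ 2 + 1) * (6 * a ^ 2 - 1) ≤ b ^ 2 + b + 1 := by
        rw [← hcm, mul_comm c]
        exact Nat.mul_le_mul h (by omega)
      have h3 : b ^ 2 + b + 1 ≤ (a ^ 2 + a + 1) ^ 2 + (a ^ 2 + a + 1) + 1 := by gcongr
      have h4 := h2.trans h3
      clear * - h4 ha3 ha24
      interval_cases a <;> omega
    refine no_small_cycle a ha24 ha3 (Nat.odd_iff.1 ha) n hna ?_ m hma ?_ ?_
    · rw [← hbn, Nat.mul_mod_left]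
    · rw [← hb, ← hc, hcu, Nat.mul_mod_right]
    · rw [← hb, ← hcm, Nat.mul_mod_left]
  · have hy1 : 1 ≤ y := Nat.pos_of_ne_zero (by rintro rfl; simp at hid')
    clear hid hy hcu hcm hbn hu
    have hnale : n * (a + 1) < a ^ 2 := by nlinarith
    have ha2 : 24 * a ≤ a ^ 2 := by nlinarith
    rcases hy1.lt_or_eq with h2 | rfl
    · obtain ⟨z, rfl⟩ := Nat.exists_eq_add_of_le h2
      have hz : z ≤ a ^ 2 * z := Nat.le_mul_of_pos_left _ (by positivity)
      have hexp : a ^ 2 * (Nat.succ 1 + z) = 2 * a ^ 2 + a ^ 2 * z := by ring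
      omega
    · have hn2 : 2 * n ≤ a := by
        by_contra! h
        have h1 : (a + 1) * (a + 1) ≤ (2 * n) * (2 * n) := Nat.mul_le_mul h h
        nlinarith
      have hna2 : 2 * n * a ≤ a ^ 2 := by nlinarith
      linarith

/-- The prime `c` divides `N` once, `b` divides it twice and `c ∣ σ(b ^ 2)`. -/
lemma logBound_of_dvd_sq_add_self_add_one {a b c d T : ℕ} (hap : a.Prime) (hbp : b.Prime)
    (hcp : c.Prime) (ha : Odd a) (hb : Odd b) (ha3 : 3 ≤ a) (hab : a < b) (hbc : b < c)
    (hT : 0 < T) (hcd : c + 1 = 2 * d) (hd : d ∣ c * (b ^ 2 * T)) (haT : a ^ 2 ∣ T)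
    (hcb : c ∣ b ^ 2 + b + 1) (hbN : b ^ 2 + b + 1 ∣ c * (b ^ 2 * T))
    (hα : a ^ 4 ∣ T ∨ a ^ 2 + a + 1 ∣ c * (b ^ 2 * T)) :
    LogBound a b c (c * (b ^ 2 * T)) := by
  have ha0 : 0 < a := by omega
  have hbc1 : ¬ b ∣ c + 1 := not_dvd_add_one_of_dvd hb (by omega) hbc hcb
  have hdT : d ∣ T := by
    refine dvd_of_dvd_mul_sq_mul hcp hbp (fun h => ?_) (fun h => ?_) hd
    · have := Nat.le_of_dvd (by omega) h
      omega
    · exact hbc1 (hcd ▸ h.mul_left 2)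
  have hcT : c ≤ 2 * T := by
    have := Nat.le_of_dvd hT hdT
    omega
  by_cases had : a ^ 2 ∣ d
  swap
  · have h1 := Nat.le_of_dvd hT (mul_dvd_of_not_sq_dvd hap haT hdT had)
    exact logBound_of_mul_le_of_sq_le ha0 hab.le hbc.le hT (by nlinarith)
      (Nat.le_of_dvd hT haT)
  rcases hα with hα | hα
  · exact logBound_of_le_of_pow_four_le ha0 hab.le hbc.le hT hcT (Nat.le_of_dvd hT hα)
  obtain ⟨u, hu⟩ := had
  have hcu : c + 1 = 2 * a ^ 2 * u := by rw [hcd, hu, mul_assoc]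
  have hu0 : 0 < u := Nat.pos_of_ne_zero (by rintro rfl; simp at hcu)
  have hcop : Nat.Coprime (a ^ 2) (a ^ 2 + a + 1) :=
    ((Nat.Prime.coprime_iff_not_dvd hap).2 (not_dvd_sq_add_self_add_one hap)).pow_left 2
  have hca : ¬ c ∣ a ^ 2 + a + 1 := by
    intro h
    have := Nat.le_of_dvd (by omega) h
    nlinarith
  by_cases hba : b ∣ a ^ 2 + a + 1
  swap
  · have h1 := hcop.mul_dvd_of_dvd_of_dvd haT (dvd_of_dvd_mul_sq_mul hcp hbp hca hba hα)
    have h2 := Nat.le_of_dvd hT h1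
    exact logBound_of_le_of_pow_four_le ha0 hab.le hbc.le hT hcT (by nlinarith)
  obtain ⟨n, hn⟩ := hba
  obtain ⟨m, hm⟩ := hcb
  have hna : n < a := by
    have : a + 2 ≤ b := by
      obtain ⟨x, rfl⟩ := ha
      obtain ⟨y, rfl⟩ := hb
      omega
    nlinarith
  have hn0 : 0 < n := Nat.pos_of_ne_zero (by rintro rfl; simp at hn)
  have hm0 : 0 < m := Nat.pos_of_ne_zero (by rintro rfl; simp at hm)
  have hu2 : u ≤ 2 := cycle_le_two ha ha3 hna hn.symm hm.symm hcu
  have hc4 : c ≤ 2 ^ 2 * a ^ 2 := by nlinarith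
  have hnT : a ^ 2 * n ∣ T := by
    refine (hcop.coprime_dvd_right (Dvd.intro_left b hn.symm)).mul_dvd_of_dvd_of_dvd haT
      (dvd_of_dvd_mul_sq_mul hcp hbp (fun h => ?_) (fun h => ?_)
        ((Dvd.intro_left b hn.symm).trans hα))
    · have := Nat.le_of_dvd hn0 h
      omega
    · have := Nat.le_of_dvd hn0 h
      omega
  have hnT' := Nat.le_of_dvd hT hnT
  have hbT : a ^ 4 ≤ b * T := by
    calc a ^ 4 ≤ a ^ 2 * (a ^ 2 + a + 1) := by nlinarith
      _ = b * (a ^ 2 * n) := by rw [hn]; ring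
      _ ≤ b * T := by gcongr
  by_cases ham : a ∣ m
  · have hid := cycle_identity hn.symm hm.symm hcu
    have han : a ∣ n ^ 2 + n + 1 := by
      obtain ⟨t, rfl⟩ := ham
      have h1 : a ∣ n ^ 2 * (a * t + 1) + n * (a + 1) + 2 * a + 1 +
          a ^ 2 * (a ^ 2 + 2 * a + 3 + n) := hid ▸ ⟨a * (2 * u * (a * t) * n ^ 2), by ring⟩
      rw [show n ^ 2 * (a * t + 1) + n * (a + 1) + 2 * a + 1 + a ^ 2 * (a ^ 2 + 2 * a + 3 + n) =
        a * (n ^ 2 * t + n + 2 + a * (a ^ 2 + 2 * a + 3 + n)) + (n ^ 2 + n + 1) by ring] at h1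
      exact (Nat.dvd_add_right (Dvd.intro _ rfl)).1 h1
    have hle := Nat.le_of_dvd (by omega) han
    have hno : Odd n := (Nat.odd_mul.1 (hn ▸ odd_sq_add_self_add_one a)).2
    have hn1 : n ≠ 1 := by
      rintro rfl
      obtain rfl : a = 3 := by omega
      obtain rfl : b = 13 := by omega
      interval_cases u <;> obtain rfl : c = _ := Nat.succ.inj hcu <;> omega
    have hn3 : 3 ≤ n := by
      obtain ⟨x, rfl⟩ := hno
      omega
    exact logBound_of_le_four_mul_sq_of_le ha0 hab.le hbc.le hT hn3 hc4 (by nlinarith) hbT hnT'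
  · have hmT : a ^ 2 * m ∣ T := by
      refine (((Nat.Prime.coprime_iff_not_dvd hap).2 ham).pow_left 2).mul_dvd_of_dvd_of_dvd haT
        (dvd_of_dvd_mul_sq_mul hcp hbp (fun h => ?_) (fun h => ?_)
          ((Dvd.intro_left c hm.symm).trans hbN))
      · have := Nat.le_of_dvd hm0 h
        nlinarith
      · exact not_dvd_sq_add_self_add_one hbp (hm ▸ h.mul_left c)
    have hmT' := Nat.le_of_dvd hT hmT
    refine logBound_of_le_four_mul_sq ha0 hab.le hbc.le hT hc4 hcT hbT ?_
    calc a ^ 10 = a ^ 6 * (a ^ 2) ^ 2 := by ring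
      _ ≤ a ^ 6 * (a ^ 2 + a + 1) ^ 2 := by gcongr; omega
      _ = a ^ 6 * (n ^ 2 * b ^ 2) := by rw [hn]; ring
      _ ≤ a ^ 6 * (n ^ 2 * (b ^ 2 + b + 1)) := by gcongr; omega
      _ = c * ((a ^ 2 * m) * (a ^ 2 * n) ^ 2) := by rw [hm]; ring
      _ ≤ c * (T * T ^ 2) := by gcongr
      _ = c * T ^ 3 := by ring

/-- The prime `b` divides `N` once and the larger prime `c` divides it twice. -/
lemma logBound_of_middle {a b c d M : ℕ} (hap : a.Prime) (hbp : b.Prime)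
    (hcp : c.Prime) (ha3 : 3 ≤ a) (hab : a < b) (hbc : b < c)
    (hM : 0 < M) (hbd : b + 1 = 2 * d) (hd : d ∣ b * (c ^ 2 * M)) (haM : a ^ 2 ∣ M)
    (hcN : c ^ 2 + c + 1 ∣ b * (c ^ 2 * M))
    (hα : a ^ 4 ∣ M ∨ a ^ 2 + a + 1 ∣ b * (c ^ 2 * M)) :
    LogBound a b c (b * (c ^ 2 * M)) := by
  have ha0 : 0 < a := by omega
  have hdM : d ∣ M := by
    refine dvd_of_dvd_mul_sq_mul hbp hcp (fun h => ?_) (fun h => ?_) hd <;>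
    · have := Nat.le_of_dvd (by omega) h
      omega
  have hcM : c ≤ M := by
    have h1 : c ^ 2 + c + 1 ∣ c ^ 2 * (b * M) := by
      rwa [show c ^ 2 * (b * M) = b * (c ^ 2 * M) by ring]
    have h2 : c ^ 2 + c + 1 ∣ b * M :=
      ((((Nat.Prime.coprime_iff_not_dvd hcp).2
        (not_dvd_sq_add_self_add_one hcp)).pow_left 2).symm).dvd_of_dvd_mul_left h1
    have h3 := Nat.le_of_dvd (Nat.mul_pos hbp.pos hM) h2
    nlinarith
  by_cases had : a ^ 2 ∣ d
  swap
  · have h1 := Nat.le_of_dvd hM (mul_dvd_of_not_sq_dvd hap haM hdM had)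
    exact logBound_of_mul_le_two_mul_cofactor ha0 hab.le hbc.le hM (by nlinarith)
  refine logBound_of_pow_four_le_cofactor ha0 hab.le hbc.le hM ?_ hcM
  rcases hα with hα | hα
  · exact Nat.le_of_dvd hM hα
  have hlt : a ^ 2 + a + 1 < b := by
    have := Nat.le_of_dvd (by omega) had
    nlinarith
  have h1 : a ^ 2 + a + 1 ∣ M := by
    refine dvd_of_dvd_mul_sq_mul hbp hcp (fun h => ?_) (fun h => ?_) hα <;>
    · have := Nat.le_of_dvd (by omega) h
      omega
  have h2 := Nat.le_of_dvd hM ((((Nat.Prime.coprime_iff_not_dvd hap).2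
    (not_dvd_sq_add_self_add_one hap)).pow_left 2).mul_dvd_of_dvd_of_dvd haM h1)
  nlinarith

lemma pow_dvd_cofactor {N p q R : ℕ} {k : ℕ} (hp : p.Prime) (hq : q.Prime) (hpq : p ≠ q)
    (j : ℕ) (hN : N = q ^ j * R) (h : p ^ k ∣ N) : p ^ k ∣ R := by
  rw [hN] at h
  exact (((Nat.coprime_primes hp hq).2 hpq).pow k j).dvd_of_dvd_mul_left h

lemma logBound_of_factorization_largest_eq_one {N a b c : ℕ} (hodd : Odd N)
    (hperf : Nat.Perfect N) (ha : a ∈ N.primeFactors) (hb : b ∈ N.primeFactors)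
    (hc : c ∈ N.primeFactors) (hab : a < b) (hbc : b < c) (hc1 : N.factorization c = 1) :
    LogBound a b c N := by
  have hN0 : N ≠ 0 := hodd.pos.ne'
  have hprime : ∀ {p}, p ∈ N.primeFactors → p.Prime := Nat.prime_of_mem_primeFactors
  have hpodd : ∀ {p}, p ∈ N.primeFactors → Odd p := fun hp =>
    hodd.of_dvd_nat (Nat.dvd_of_mem_primeFactors hp)
  have hthree : ∀ {p}, p ∈ N.primeFactors → 3 ≤ p := fun {p} hp => by
    have := (hprime hp).two_le
    obtain ⟨t, ht⟩ := hpodd hp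
    omega
  have hpos : ∀ {p}, p ∈ N.primeFactors → 0 < N.factorization p := fun hp =>
    (hprime hp).factorization_pos_of_dvd hN0 (Nat.dvd_of_mem_primeFactors hp)
  have heven : ∀ {p}, p ∈ N.primeFactors → p ≠ c → Even (N.factorization p) := fun hp hpc =>
    not_odd_factorization_of_ne hodd hperf hc hp hpc.symm (by rw [hc1]; exact odd_one)
  have hcase : ∀ {p}, p ∈ N.primeFactors → p ≠ c →
      N.factorization p = 2 ∨ 4 ≤ N.factorization p := fun hp hpc => by
    have := hpos hp
    obtain ⟨t, ht⟩ := heven hp hpc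
    omega
  have hdvd : ∀ p, p ^ N.factorization p ∣ N := fun p => Nat.ordProj_dvd N p
  have hap := hprime ha
  have hbp := hprime hb
  have hcp := hprime hc
  have ha0 := hap.pos
  have hac : a ≠ c := by omega
  have hbc' : b ≠ c := hbc.ne
  obtain ⟨R, hR⟩ := Nat.dvd_of_mem_primeFactors hc
  have hR1 : N = c ^ 1 * R := by rw [pow_one, hR]
  have hR0 : 0 < R := Nat.pos_of_ne_zero (by rintro rfl; simp at hR; exact hN0 hR)
  have hpowR : ∀ {p k}, p ∈ N.primeFactors → p ≠ c → k ≤ N.factorization p → p ^ k ∣ R :=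
    fun hp hpc hk => pow_dvd_cofactor (hprime hp) hcp hpc 1 hR1
      ((pow_dvd_pow _ hk).trans (hdvd _))
  have htwo : ∀ {p}, p ∈ N.primeFactors → p ≠ c → 2 ≤ N.factorization p := fun hp hpc => by
    have := hcase hp hpc
    omega
  have hnotR : ∀ {p}, p ∈ N.primeFactors → ¬ p ^ (N.factorization p + 1) ∣ R := fun hp h =>
    Nat.pow_succ_factorization_not_dvd hN0 (hprime hp) (hR ▸ h.mul_left c)
  obtain ⟨d, hcd, hdN⟩ := exists_add_one_eq_two_mul hodd hperf hc hc1
  have hcopab : ∀ i j, Nat.Coprime (a ^ i) (b ^ j) := fun i j =>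
    ((Nat.coprime_primes hap hbp).2 hab.ne).pow i j
  have hdR : d ∣ R := by
    have hcd' : ¬ c ∣ d := fun h => by
      have := Nat.le_of_dvd (by omega) h
      omega
    exact (((Nat.Prime.coprime_iff_not_dvd hcp).2 hcd').symm).dvd_of_dvd_mul_left (hR ▸ hdN)
  by_cases hmain : N.factorization b = 2 ∧ c ∣ b ^ 2 + b + 1
  · obtain ⟨hb2, hcb⟩ := hmain
    obtain ⟨T, rfl⟩ := hpowR hb hbc' hb2.ge
    have hT : 0 < T := Nat.pos_of_mul_pos_left hR0
    have haT : ∀ k ≤ N.factorization a, a ^ k ∣ T := fun k hk =>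
      (hcopab k 2).dvd_of_dvd_mul_left (hpowR ha hac hk)
    have hbN := sq_add_self_add_one_dvd hodd hperf hb hb2
    have hα : a ^ 4 ∣ T ∨ a ^ 2 + a + 1 ∣ N := (hcase ha hac).symm.imp (haT 4)
      (sq_add_self_add_one_dvd hodd hperf ha)
    have haT2 := haT 2 (htwo ha hac)
    have hbo := hpodd hb
    have hao := hpodd ha
    have ha3 := hthree ha
    rw [hR] at hbN hα hdN ⊢
    exact logBound_of_dvd_sq_add_self_add_one hap hbp hcp hao hbo ha3 hab hbc hT hcd hdN haT2
      hcb hbN hα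
  have hbR : b ^ 4 ≤ R := by
    rcases hcase hb hbc' with hb2 | hb4
    · have hcb : ¬ c ∣ b ^ 2 + b + 1 := fun h => hmain ⟨hb2, h⟩
      have h1 : b ^ 2 + b + 1 ∣ R :=
        (((Nat.Prime.coprime_iff_not_dvd hcp).2 hcb).symm).dvd_of_dvd_mul_left
          (hR ▸ sq_add_self_add_one_dvd hodd hperf hb hb2)
      have h2 := Nat.le_of_dvd hR0 ((((Nat.Prime.coprime_iff_not_dvd hbp).2
        (not_dvd_sq_add_self_add_one hbp)).pow_left 2).mul_dvd_of_dvd_of_dvd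
          (hpowR hb hbc' hb2.ge) h1)
      nlinarith
    · exact Nat.le_of_dvd hR0 (hpowR hb hbc' hb4)
  obtain ⟨p, hp, hpc, hcσ⟩ := exists_dvd_geom_sum hodd hperf hc hc1
  have hAK : c ^ 2 < 2 * p * R := sq_lt_of_dvd_geom_sum (hprime hp) (hthree hp) hR0 hcd hdR
    (hpowR hp hpc le_rfl) (hnotR hp) hcσ
  have hsum : ∀ q : ℕ, ∑ i ∈ range (2 + 1), q ^ i = q ^ 2 + q + 1 := fun q => by
    simp only [sum_range_succ, range_zero, sum_empty]
    ring
  rw [hR]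
  rcases eq_or_ne p b with rfl | hpb
  · rcases hcase hp hpc with h2 | h4
    · rw [h2, hsum] at hcσ
      exact absurd ⟨h2, hcσ⟩ hmain
    · exact logBound_of_sq_le_of_sq_mul_pow_four_le ha0 hab.le hbc.le hR0 hAK.le
        (Nat.le_of_dvd hR0 ((hcopab 2 4).mul_dvd_of_dvd_of_dvd (hpowR ha hac (htwo ha hac))
          (hpowR hp hpc h4)))
  rcases eq_or_ne p a with rfl | hpa
  · rcases hcase hp hpc with h2 | h4
    · rw [h2, hsum] at hcσ
      have hp3 := hthree hp
      have hpd : ¬ p ∣ d := fun h =>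
        not_dvd_add_one_of_dvd (hpodd hp) hp3 (hab.trans hbc) hcσ (hcd ▸ h.mul_left 2)
      have hbd : ¬ b ^ 2 ∣ d := fun h => by
        have h1 := Nat.le_of_dvd (by omega) h
        have h2 := Nat.le_of_dvd (by omega) hcσ
        nlinarith
      have h3 : b * d ∣ R := mul_dvd_of_not_sq_dvd hbp (hpowR hb hbc' (htwo hb hbc')) hdR hbd
      have hcop : Nat.Coprime (p ^ 2) (b * d) :=
        (((Nat.coprime_primes hap hbp).2 hab.ne).mul_right
          ((Nat.Prime.coprime_iff_not_dvd hap).2 hpd)).pow_left 2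
      have h4 := Nat.le_of_dvd hR0
        (hcop.mul_dvd_of_dvd_of_dvd (hpowR hp hpc h2.ge) h3)
      refine logBound_of_sq_mul_mul_le_of_pow_four_le ha0 hab.le hbc.le hR0 ?_ hbR
      calc p ^ 2 * b * c ≤ p ^ 2 * b * (2 * d) := by gcongr; omega
        _ = 2 * (p ^ 2 * (b * d)) := by ring
        _ ≤ 2 * R := by gcongr
    · exact logBound_of_sq_le_of_pow_four_mul_sq_le ha0 hab.le hbc.le hR0 hAK.le
        (Nat.le_of_dvd hR0 ((hcopab 4 2).mul_dvd_of_dvd_of_dvd (hpowR hp hpc h4)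
          (hpowR hb hbc' (htwo hb hbc')))) hbR
  · refine logBound_of_two_mul_sq_mul_sq_le ha0 hab.le hbc.le hR0 ?_
    have hcop : Nat.Coprime (p ^ N.factorization p) (a ^ 2 * b ^ 2) :=
      (((Nat.coprime_primes (hprime hp) hap).2 hpa).pow _ 2).mul_right
        (((Nat.coprime_primes (hprime hp) hbp).2 hpb).pow _ 2)
    have h1 := Nat.le_of_dvd hR0 (hcop.mul_dvd_of_dvd_of_dvd (hpowR hp hpc le_rfl)
      ((hcopab 2 2).mul_dvd_of_dvd_of_dvd (hpowR ha hac (htwo ha hac))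
        (hpowR hb hbc' (htwo hb hbc'))))
    calc 2 * c * (a ^ 2 * b ^ 2) ≤ 3 * p ^ N.factorization p * (a ^ 2 * b ^ 2) :=
          Nat.mul_le_mul_right _ (two_mul_le_of_dvd_geom_sum (hthree hp) hcσ)
      _ ≤ 3 * R := by linarith

lemma logBound_of_factorization_middle_eq_one {N a b c : ℕ} (hodd : Odd N)
    (hperf : Nat.Perfect N) (ha : a ∈ N.primeFactors) (hb : b ∈ N.primeFactors)
    (hc : c ∈ N.primeFactors) (hab : a < b) (hbc : b < c) (hb1 : N.factorization b = 1) :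
    LogBound a b c N := by
  have hN0 : N ≠ 0 := hodd.pos.ne'
  have hap := Nat.prime_of_mem_primeFactors ha
  have hbp := Nat.prime_of_mem_primeFactors hb
  have hcp := Nat.prime_of_mem_primeFactors hc
  have hcase : ∀ {p}, p ∈ N.primeFactors → p ≠ b →
      N.factorization p = 2 ∨ 4 ≤ N.factorization p := fun {p} hp hpb => by
    have := (Nat.prime_of_mem_primeFactors hp).factorization_pos_of_dvd hN0
      (Nat.dvd_of_mem_primeFactors hp)
    obtain ⟨t, ht⟩ := not_odd_factorization_of_ne hodd hperf hb hp hpb.symm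
      (by rw [hb1]; exact odd_one)
    omega
  have hdvd : ∀ {p k}, k ≤ N.factorization p → p ^ k ∣ N := fun {p k} hk =>
    (pow_dvd_pow _ hk).trans (Nat.ordProj_dvd N p)
  have hcopab : ∀ i j, Nat.Coprime (a ^ i) (b ^ j) := fun i j =>
    ((Nat.coprime_primes hap hbp).2 hab.ne).pow i j
  have hcopac : ∀ i j, Nat.Coprime (a ^ i) (c ^ j) := fun i j =>
    ((Nat.coprime_primes hap hcp).2 (hab.trans hbc).ne).pow i j
  have hcopbc : ∀ i j, Nat.Coprime (b ^ i) (c ^ j) := fun i j =>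
    ((Nat.coprime_primes hbp hcp).2 hbc.ne).pow i j
  have ha2 : 2 ≤ N.factorization a := by
    have := hcase ha hab.ne
    omega
  rcases hcase hc hbc.ne' with hc2 | hc4
  · obtain ⟨d, hbd, hdN⟩ := exists_add_one_eq_two_mul hodd hperf hb hb1
    have hcN := sq_add_self_add_one_dvd hodd hperf hc hc2
    obtain ⟨M, hM⟩ := (hcopbc 1 2).mul_dvd_of_dvd_of_dvd (hdvd hb1.ge) (hdvd hc2.ge)
    rw [pow_one, mul_assoc] at hM
    have hM0 : 0 < M := Nat.pos_of_ne_zero (by rintro rfl; simp at hM; exact hN0 hM)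
    have haM : ∀ k ≤ N.factorization a, a ^ k ∣ M := fun k hk =>
      (hcopac k 2).dvd_of_dvd_mul_left ((hcopab k 1).dvd_of_dvd_mul_left
        (by rw [pow_one, ← hM]; exact hdvd hk))
    have hα : a ^ 4 ∣ M ∨ a ^ 2 + a + 1 ∣ N := (hcase ha hab.ne).symm.imp (haM 4)
      (sq_add_self_add_one_dvd hodd hperf ha)
    have ha3 : 3 ≤ a := by
      have := hap.two_le
      obtain ⟨t, ht⟩ := hodd.of_dvd_nat (Nat.dvd_of_mem_primeFactors ha)
      omega
    have haM2 := haM 2 ha2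
    rw [hM] at hdN hcN hα ⊢
    exact logBound_of_middle hap hbp hcp ha3 hab hbc hM0 hbd hdN haM2 hcN hα
  · refine logBound_of_sq_mul_mul_pow_four_le hap.pos hab.le hbc.le
      (Nat.le_of_dvd hodd.pos ?_)
    have := ((hcopac 2 4).mul_left (hcopbc 1 4)).mul_dvd_of_dvd_of_dvd
      ((hcopab 2 1).mul_dvd_of_dvd_of_dvd (hdvd ha2) (hdvd hb1.ge)) (hdvd hc4)
    rwa [pow_one] at this

lemma logBound_of_perfect {N a b c : ℕ} (hodd : Odd N)
    (hperf : Nat.Perfect N) (ha : a ∈ N.primeFactors) (hb : b ∈ N.primeFactors)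
    (hc : c ∈ N.primeFactors) (hab : a < b) (hbc : b < c) : LogBound a b c N := by
  have hN0 : N ≠ 0 := hodd.pos.ne'
  by_cases hc1 : N.factorization c = 1
  · exact logBound_of_factorization_largest_eq_one hodd hperf ha hb hc hab hbc hc1
  by_cases hb1 : N.factorization b = 1
  · exact logBound_of_factorization_middle_eq_one hodd hperf ha hb hc hab hbc hb1
  have hap := Nat.prime_of_mem_primeFactors ha
  have hbp := Nat.prime_of_mem_primeFactors hb
  have hcp := Nat.prime_of_mem_primeFactors hc
  have hpos : ∀ {p}, p ∈ N.primeFactors → 0 < N.factorization p := fun {p} hp =>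
    (Nat.prime_of_mem_primeFactors hp).factorization_pos_of_dvd hN0
      (Nat.dvd_of_mem_primeFactors hp)
  have hdvd : ∀ {p k}, k ≤ N.factorization p → p ^ k ∣ N := fun {p k} hk =>
    (pow_dvd_pow _ hk).trans (Nat.ordProj_dvd N p)
  have hb2 : 2 ≤ N.factorization b := by
    have := hpos hb
    omega
  have hc2 : 2 ≤ N.factorization c := by
    have := hpos hc
    omega
  have hdvdN := ((((Nat.coprime_primes hap hcp).2 (hab.trans hbc).ne).pow_right 2).mul_left
    (((Nat.coprime_primes hbp hcp).2 hbc.ne).pow 2 2)).mul_dvd_of_dvd_of_dvd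
    ((((Nat.coprime_primes hap hbp).2 hab.ne).pow_right 2).mul_dvd_of_dvd_of_dvd
      (Nat.dvd_of_mem_primeFactors ha) (hdvd hb2)) (hdvd hc2)
  exact logBound_of_mul_sq_mul_sq_le hap.pos hab.le hbc.le (Nat.le_of_dvd hodd.pos hdvdN)

/-- Let N be an odd perfect number with at least three distinct
prime divisors, with c, b, a its largest, second largest and third largest
prime divisors respectively. Then abc < 2^(5/12) · 3^(7/36) · N^(11/18). -/
theorem stmt_3 (N : ℕ) (hodd : Odd N) (hperf : Nat.Perfect N)
    (hk : 3 ≤ N.primeFactors.card)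
    (a b c : ℕ)
    (ha : a ∈ N.primeFactors) (hb : b ∈ N.primeFactors) (hc : c ∈ N.primeFactors)
    (ha2 : (N.primeFactors.filter (fun q => a < q)).card = 2)
    (hb1 : (N.primeFactors.filter (fun q => b < q)).card = 1)
    (hc0 : (N.primeFactors.filter (fun q => c < q)).card = 0) :
    (a * b * c : ℝ) < (2 : ℝ) ^ ((5 : ℝ) / 12) * (3 : ℝ) ^ ((7 : ℝ) / 36) *
      (N : ℝ) ^ ((11 : ℝ) / 18) := by
  have hlt : ∀ {x y : ℕ}, (N.primeFactors.filter (fun q => y < q)).card <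
      (N.primeFactors.filter (fun q => x < q)).card → x < y := fun {x y} h => by
    by_contra! hyx
    exact absurd (card_le_card (monotone_filter_right N.primeFactors
      fun q _ (hq : x < q) => hyx.trans_lt hq)) h.not_ge
  exact (logBound_of_perfect hodd hperf ha hb hc (hlt (by omega)) (hlt (by omega))).lt
    (Nat.pos_of_mem_primeFactors ha) (Nat.pos_of_mem_primeFactors hb)
    (Nat.pos_of_mem_primeFactors hc) hodd.pos
end

section
/- If p and q are positive odd integers such that q divides p² + p + 1 and p divides q + 1, then (p, q) = (1, 1) or (p, q) = (1, 3). -/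
/-- If p and q are positive odd integers such that q ∣ p² + p + 1
and p ∣ q + 1, then (p, q) = (1, 1) or (p, q) = (1, 3). -/
theorem stmt_4 (p q : ℕ) (hp : 0 < p) (hq : 0 < q) (hpodd : Odd p) (hqodd : Odd q)
    (h1 : q ∣ p ^ 2 + p + 1) (h2 : p ∣ q + 1) :
    (p = 1 ∧ q = 1) ∨ (p = 1 ∧ q = 3) := by
  have hp1 : p = 1 := by
    by_contra hne
    have hp3 : 3 ≤ p := by
      obtain ⟨a, rfl⟩ := hpodd
      omega
    obtain ⟨k, hk⟩ := h1
    have hkodd : Odd k := by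
      have hodd : Odd (q * k) := by
        rw [← hk]
        have heven : Even (p ^ 2 + p) := by
          rw [sq, ← Nat.mul_succ]
          exact Nat.even_mul_succ_self p
        exact heven.add_one
      exact (Nat.odd_mul.mp hodd).2
    -- The cofactor `k` satisfies the same divisibility as `q`.
    have hpk : p ∣ k + 1 := by
      have hdvd : p ∣ (q + 1) * k := h2.mul_right k
      have hrw : (q + 1) * k = p * (p + 1) + (k + 1) := by linarith
      rw [hrw] at hdvd
      exact (Nat.dvd_add_right (Dvd.intro _ rfl)).mp hdvd
    have two_le_of_eq : ∀ x m : ℕ, Odd x → x + 1 = p * m → 2 ≤ m := by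
      intro x m hx hm
      have heven : Even (p * m) := hm ▸ hx.add_one
      have hmeven : Even m :=
        (Nat.even_mul.mp heven).resolve_left (Nat.not_even_iff_odd.mpr hpodd)
      obtain ⟨a, rfl⟩ := hmeven
      rcases Nat.eq_zero_or_pos a with rfl | ha
      · simp at hm
      · omega
    obtain ⟨m, hm⟩ := h2
    obtain ⟨n, hn⟩ := hpk
    have hm2 := two_le_of_eq q m hqodd hm
    have hn2 := two_le_of_eq k n hkodd hn
    have hmul : p * (p * (m * n)) = p * (p + 1 + m + n) := by
      have hprod : (q + 1) * (k + 1) = p * m * (p * n) := by rw [hm, hn]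
      linarith
    have heq : p * (m * n) = p + 1 + m + n := Nat.eq_of_mul_eq_mul_left hp hmul
    obtain ⟨a, rfl⟩ := Nat.exists_eq_add_of_le hm2
    obtain ⟨b, rfl⟩ := Nat.exists_eq_add_of_le hn2
    obtain ⟨c, rfl⟩ := Nat.exists_eq_add_of_le hp3
    have hab : 0 ≤ a * b := Nat.zero_le _
    have hc : 0 ≤ c * (2 * a + 2 * b + a * b) := Nat.zero_le _
    linarith
  subst hp1
  have hle : q ≤ 3 := Nat.le_of_dvd (by norm_num) h1
  obtain ⟨a, rfl⟩ := hqodd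
  omega
end

section
/- Let p and q be positive integers. Then p divides q² + q + 1 and q divides p² + p + 1 if and only if 5pq = p² + q² + p + q + 1. -/
theorem dvd_of_eq_mul_mul {k p q : ℕ} (h : p ^ 2 + q ^ 2 + p + q + 1 = k * p * q) :
    p ∣ q ^ 2 + q + 1 := by
  have h₁ : p ∣ p * (p + 1) + (q ^ 2 + q + 1) := ⟨k * q, by linarith⟩
  exact (Nat.dvd_add_right (dvd_mul_right p _)).mp h₁

/-- Vieta descent: the quotient of `p² + q² + p + q + 1` by `p * q` can only be `5`. -/
theorem quotient_eq_five (k : ℕ) (p : ℕ) :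
    ∀ q, 0 < q → q ≤ p → p ^ 2 + q ^ 2 + p + q + 1 = k * p * q → k = 5 := by
  induction p using Nat.strong_induction_on with
  | _ p ih =>
    intro q hq hqp h
    have hp : 0 < p := hq.trans_le hqp
    have hdvd : p ∣ q ^ 2 + q + 1 := dvd_of_eq_mul_mul h
    rcases hqp.eq_or_lt with rfl | hlt
    · have h₁ : q ∣ q * (q + 1) + 1 := by
        rwa [show q * (q + 1) + 1 = q ^ 2 + q + 1 by ring]
      have h₂ : q = 1 := Nat.dvd_one.mp ((Nat.dvd_add_right (dvd_mul_right q _)).mp h₁)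
      subst h₂
      omega
    · obtain ⟨c, hc⟩ := hdvd
      have hc0 : 0 < c := by
        rcases Nat.eq_zero_or_pos c with rfl | hc0
        · omega
        · exact hc0
      have hcq : c ≤ q := by
        by_contra! hcq
        nlinarith
      have hsum : p + c + 1 = k * q := by
        apply Nat.eq_of_mul_eq_mul_left hp
        linarith
      refine ih q hlt c hc0 hcq ?_
      calc q ^ 2 + c ^ 2 + q + c + 1 = c * (p + c + 1) := by linarith
        _ = k * q * c := by rw [hsum]; ring

/-- Let p and q be positive integers. Then p ∣ q² + q + 1 and
q ∣ p² + p + 1 if and only if 5pq = p² + q² + p + q + 1. -/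
theorem stmt_5 (p q : ℕ) (hp : 0 < p) (hq : 0 < q) :
    (p ∣ q ^ 2 + q + 1 ∧ q ∣ p ^ 2 + p + 1) ↔
      5 * p * q = p ^ 2 + q ^ 2 + p + q + 1 := by
  constructor
  · rintro ⟨hpq, hqp⟩
    have hcop : Nat.Coprime p q := by
      have h₁ : Nat.gcd p q ∣ q * (q + 1) + 1 := by
        rw [show q * (q + 1) + 1 = q ^ 2 + q + 1 by ring]
        exact (Nat.gcd_dvd_left p q).trans hpq
      exact Nat.dvd_one.mp
        ((Nat.dvd_add_right ((Nat.gcd_dvd_right p q).mul_right _)).mp h₁)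
    have hp' : p ∣ p ^ 2 + q ^ 2 + p + q + 1 := by
      rw [show p ^ 2 + q ^ 2 + p + q + 1 = p * (p + 1) + (q ^ 2 + q + 1) by ring]
      exact dvd_add (dvd_mul_right p _) hpq
    have hq' : q ∣ p ^ 2 + q ^ 2 + p + q + 1 := by
      rw [show p ^ 2 + q ^ 2 + p + q + 1 = q * (q + 1) + (p ^ 2 + p + 1) by ring]
      exact dvd_add (dvd_mul_right q _) hqp
    obtain ⟨k, hk⟩ := hcop.mul_dvd_of_dvd_of_dvd hp' hq'
    have hk5 : k = 5 := by
      rcases le_total q p with hle | hle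
      · exact quotient_eq_five k p q hq hle (by linarith)
      · exact quotient_eq_five k q p hp hle (by linarith)
    subst hk5
    linarith
  · intro h
    exact ⟨dvd_of_eq_mul_mul h.symm, dvd_of_eq_mul_mul (k := 5) (by linarith)⟩
end

section
/- Let (t_n) be the sequence defined by t_1 = t_2 = 1 and t_{n+2} · t_n = t_{n+1}² + t_{n+1} + 1 for all n ≥ 1. If p and q are positive integers with p ≤ q, p | q² + q + 1, and q | p² + p + 1, then there exists n ≥ 1 with p = t_n and q = t_{n+1}. -/
/-- Let (t_n) be the sequence with t_1 = t_2 = 1 and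
t_{n+2} · t_n = t_{n+1}² + t_{n+1} + 1 for all n ≥ 1. If p and q are positive
integers with p ≤ q, p ∣ q² + q + 1 and q ∣ p² + p + 1, then (p, q) is a pair
of consecutive terms of the sequence. -/
theorem stmt_6 (t : ℕ → ℕ) (h1 : t 1 = 1) (h2 : t 2 = 1)
    (hrec : ∀ n, 1 ≤ n → t (n + 2) * t n = (t (n + 1)) ^ 2 + t (n + 1) + 1)
    (p q : ℕ) (hp : 0 < p) (hq : 0 < q) (hpq : p ≤ q)
    (hd1 : p ∣ q ^ 2 + q + 1) (hd2 : q ∣ p ^ 2 + p + 1) :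
    ∃ n, 1 ≤ n ∧ p = t n ∧ q = t (n + 1) := by
  induction q using Nat.strong_induction_on generalizing p with
  | _ q ih =>
  rcases hpq.eq_or_lt with rfl | hlt
  · have hone : p ∣ 1 := by
      refine (Nat.dvd_add_right ?_).mp hd1
      exact ⟨p + 1, by ring⟩
    have hp1 : p = 1 := Nat.dvd_one.mp hone
    exact ⟨1, le_rfl, by rw [h1, hp1], by rw [h2, hp1]⟩
  · obtain ⟨r, hr⟩ := hd2
    have hrpos : 0 < r := Nat.pos_of_ne_zero (by rintro rfl; simp at hr)
    have hrp : r ≤ p := by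
      by_contra! h
      nlinarith [Nat.mul_le_mul hlt h]
    have hdvd : p ∣ r ^ 2 + r + 1 := by
      have h : p ∣ r ^ 2 * (q ^ 2 + q + 1) := hd1.mul_left _
      have heq : r ^ 2 * (q ^ 2 + q + 1) =
          p * ((p + 1) * (p ^ 2 + p + 2 + r)) + (r ^ 2 + r + 1) := by
        calc r ^ 2 * (q ^ 2 + q + 1) = (q * r) ^ 2 + r * (q * r) + r ^ 2 := by ring
          _ = _ := by rw [← hr]; ring
      rw [heq] at h
      exact (Nat.dvd_add_right (dvd_mul_right _ _)).mp h
    obtain ⟨n, hn, hrn, hpn⟩ :=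
      ih p hlt r hrpos hp hrp ⟨q, by rw [hr, mul_comm]⟩ hdvd
    refine ⟨n + 1, by omega, hpn, ?_⟩
    have h := hrec n hn
    rw [← hpn, ← hrn, hr] at h
    exact (Nat.eq_of_mul_eq_mul_right hrpos h).symm
end

section
/- Let (t_n) be the sequence defined by t_1 = t_2 = 1 and t_{n+2} · t_n = t_{n+1}² + t_{n+1} + 1 for all n ≥ 1. Then for all n > 3, one has 4·t_n < t_{n+1} < 5·t_n. -/
/-- A sequence with `t 1 = t 2 = 1` and `t (n + 2) * t n = t (n + 1) ^ 2 + t (n + 1) + 1` satisfies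
the linear recurrence `t (n + 2) = 5 * t (n + 1) - t n - 1`, and grows by at least `2` at each step
from index `2` on. -/
lemma linear_recurrence_and_growth (t : ℕ → ℕ) (h1 : t 1 = 1) (h2 : t 2 = 1)
    (hrec : ∀ n, 1 ≤ n → t (n + 2) * t n = (t (n + 1)) ^ 2 + t (n + 1) + 1) (n : ℕ) (hn : 2 ≤ n) :
    t n + 2 ≤ t (n + 1) ∧ t (n + 2) + t n + 1 = 5 * t (n + 1) := by
  induction n, hn using Nat.le_induction with
  | base =>
    have h3 : t 3 = 3 := by simpa [h1, h2] using hrec 1 le_rfl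
    have h4 : t 4 = 13 := by simpa [h2, h3] using hrec 2 one_le_two
    simp [h2, h3, h4]
  | succ n hn ih =>
    obtain ⟨hgrowth, hlin⟩ := ih
    refine ⟨by show t (n + 1) + 2 ≤ t (n + 2); lia, ?_⟩
    have hcur := hrec n (by lia)
    have hnext : t (n + 3) * t (n + 1) = t (n + 2) ^ 2 + t (n + 2) + 1 := hrec (n + 1) (by lia)
    show t (n + 3) + t (n + 1) + 1 = 5 * t (n + 2)
    refine Nat.eq_of_mul_eq_mul_right (show 0 < t (n + 1) by lia) ?_
    zify at *
    linear_combination hnext - hcur + (t (n + 2) : ℤ) * hlin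

/-- Let (t_n) be the sequence with t_1 = t_2 = 1 and
t_{n+2} · t_n = t_{n+1}² + t_{n+1} + 1 for all n ≥ 1. Then for all n > 3,
4·t_n < t_{n+1} < 5·t_n. -/
theorem stmt_7 (t : ℕ → ℕ) (h1 : t 1 = 1) (h2 : t 2 = 1)
    (hrec : ∀ n, 1 ≤ n → t (n + 2) * t n = (t (n + 1)) ^ 2 + t (n + 1) + 1) :
    ∀ n, 3 < n → 4 * t n < t (n + 1) ∧ t (n + 1) < 5 * t n := by
  intro n hn
  obtain ⟨m, rfl⟩ : ∃ m, n = m + 1 := ⟨n - 1, by lia⟩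
  obtain ⟨hgrowth, hlin⟩ := linear_recurrence_and_growth t h1 h2 hrec m (by lia)
  show 4 * t (m + 1) < t (m + 2) ∧ t (m + 2) < 5 * t (m + 1)
  lia
end

section
/- There are no odd primes p and q such that p² divides q² + q + 1 and q divides p² + p + 1. -/
/-- Vieta jumping: the only value of `k` for which `a² + b² + a + b + 1 = k a b` has a solution in
positive integers is `5`. -/
theorem eq_five_of_sq_add_sq_add_add_one_eq_mul {k : ℤ} {a b : ℤ} (ha : 0 < a) (hab : a ≤ b)
    (h : a ^ 2 + b ^ 2 + a + b + 1 = k * (a * b)) : k = 5 := by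
  obtain rfl | hlt := hab.eq_or_lt
  · have hdvd : a ∣ 1 := ⟨k * a - 2 * a - 2, by linear_combination h⟩
    obtain rfl : a = 1 := Int.eq_one_of_dvd_one ha.le hdvd
    linarith
  · have hroot : b * (k * a - 1 - b) = a ^ 2 + a + 1 := by linear_combination -h
    have hpos : 0 < k * a - 1 - b := by
      by_contra! hneg
      nlinarith
    have hle : k * a - 1 - b ≤ a := by
      by_contra! hgt
      nlinarith
    exact eq_five_of_sq_add_sq_add_add_one_eq_mul hpos hle (by linear_combination h)
termination_by b.toNat
decreasing_by omega

/-- There are no odd primes p and q with p² ∣ q² + q + 1 and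
q ∣ p² + p + 1. -/
theorem stmt_8 (p q : ℕ) (hp : p.Prime) (hq : q.Prime) (hpodd : Odd p) (hqodd : Odd q) :
    ¬ (p ^ 2 ∣ q ^ 2 + q + 1 ∧ q ∣ p ^ 2 + p + 1) := by
  rintro ⟨hpq, hqp⟩
  have hne : p ≠ q := by
    rintro rfl
    have hdvd : p ∣ p * (p + 1) + 1 := by convert hqp using 1; ring
    exact hp.one_lt.ne' (Nat.dvd_one.mp ((Nat.dvd_add_right (dvd_mul_right p _)).mp hdvd))
  have hp_dvd : p ∣ p ^ 2 + q ^ 2 + p + q + 1 := by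
    have hsum : p ^ 2 + q ^ 2 + p + q + 1 = p * (p + 1) + (q ^ 2 + q + 1) := by ring
    exact hsum ▸ dvd_add (dvd_mul_right p _) ((dvd_pow_self p two_ne_zero).trans hpq)
  have hq_dvd : q ∣ p ^ 2 + q ^ 2 + p + q + 1 := by
    have hsum : p ^ 2 + q ^ 2 + p + q + 1 = q * (q + 1) + (p ^ 2 + p + 1) := by ring
    exact hsum ▸ dvd_add (dvd_mul_right q _) hqp
  obtain ⟨k, hk⟩ := ((Nat.coprime_primes hp hq).mpr hne).mul_dvd_of_dvd_of_dvd hp_dvd hq_dvd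
  have hkZ : (p : ℤ) ^ 2 + q ^ 2 + p + q + 1 = k * (p * q) := by
    rw [mul_comm (k : ℤ)]
    exact_mod_cast hk
  have hp_pos : (0 : ℤ) < p := mod_cast hp.pos
  have hq_pos : (0 : ℤ) < q := mod_cast hq.pos
  have hk5 : (k : ℤ) = 5 := by
    rcases le_total (p : ℤ) q with hle | hle
    · exact eq_five_of_sq_add_sq_add_add_one_eq_mul hp_pos hle hkZ
    · exact eq_five_of_sq_add_sq_add_add_one_eq_mul hq_pos hle (by linear_combination hkZ)
  rw [hk5] at hkZ
  obtain ⟨m, hm⟩ := hpq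
  have hmZ : (q : ℤ) ^ 2 + q + 1 = p ^ 2 * m := mod_cast hm
  have hlin : 5 * (q : ℤ) - 1 = p * (m + 1) :=
    mul_left_cancel₀ hp_pos.ne' (by linear_combination hmZ - hkZ)
  -- `q ≡ 1/5` is a root of `x² + x + 1` modulo `p`, and `25 (1/25 + 1/5 + 1) = 31`.
  have h31 : (p : ℤ) ∣ (31 : ℕ) :=
    ⟨25 * p * m - (m + 1) * (5 * q + 6), by
      push_cast
      linear_combination 25 * hmZ - (5 * (q : ℤ) + 6) * hlin⟩
  obtain rfl : p = 31 :=
    (Nat.prime_dvd_prime_iff_eq hp (by norm_num)).mp (Int.natCast_dvd_natCast.mp h31)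
  have hq993 : q ∣ 3 * 331 := hqp
  rcases (Nat.Prime.dvd_mul hq).mp hq993 with h | h
  · obtain rfl := (Nat.prime_dvd_prime_iff_eq hq (by norm_num)).mp h
    omega
  · obtain rfl := (Nat.prime_dvd_prime_iff_eq hq (by norm_num)).mp h
    omega
end

section
/- Suppose p, q, r are distinct odd primes such that (p, q) is a σ_{2,2} pair and (q, r) is a σ_{2,2} pair. Then {p, q, r} = {3, 13, 61}. -/
/-- Vieta jumping: the only value of `k` for which `a² + b² + a + b + 1 = k a b` has a solution in
positive integers with `a ≤ b` is `5`. -/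
theorem vieta_quotient_eq_five_of_le (k : ℤ) (a : ℕ) : ∀ b : ℤ, 0 < a → (a : ℤ) ≤ b →
    (a : ℤ) ^ 2 + b ^ 2 + a + b + 1 = k * a * b → k = 5 := by
  induction a using Nat.strong_induction_on with
  | _ a ih =>
    intro b ha hab h
    have ha' : (0 : ℤ) < a := by exact_mod_cast ha
    have diag (h : (a : ℤ) ^ 2 + (a : ℤ) ^ 2 + a + a + 1 = k * a * a) : k = 5 := by
      have hdvd : (a : ℤ) ∣ 1 := ⟨k * a - 2 * a - 2, by linear_combination h⟩
      rw [Int.eq_one_of_dvd_one ha'.le hdvd] at h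
      linarith
    rcases hab.eq_or_lt with rfl | hlt
    · exact diag h
    · obtain ⟨c, hc⟩ : ∃ c : ℤ, c = k * a - 1 - b := ⟨_, rfl⟩
      have hbc : b * c = (a : ℤ) ^ 2 + a + 1 := by rw [hc]; linear_combination -h
      have hc0 : 0 < c := by
        by_contra! hc0
        nlinarith
      have hca : c ≤ a := by
        by_contra! hca
        nlinarith
      have hjump : c ^ 2 + (a : ℤ) ^ 2 + c + a + 1 = k * c * a := by
        linear_combination (-1 : ℤ) * hbc + c * hc
      rcases hca.eq_or_lt with rfl | hca'
      · exact diag hjump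
      · lift c to ℕ using hc0.le
        exact ih c (by exact_mod_cast hca') a (by exact_mod_cast hc0) hca hjump

/-- A pair of distinct primes with `q ∣ p² + p + 1` and `p ∣ q² + q + 1` satisfies
`p² + q² + p + q + 1 = 5 p q`. -/
theorem sigma_pair_equation {p q : ℕ} (hp : p.Prime) (hq : q.Prime) (hpq : p ≠ q)
    (h1 : q ∣ p ^ 2 + p + 1) (h2 : p ∣ q ^ 2 + q + 1) :
    (p : ℤ) ^ 2 + q ^ 2 + p + q + 1 = 5 * p * q := by
  have hdvd : p * q ∣ p ^ 2 + q ^ 2 + p + q + 1 := by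
    refine ((Nat.coprime_primes hp hq).2 hpq).mul_dvd_of_dvd_of_dvd ?_ ?_
    · rw [show p ^ 2 + q ^ 2 + p + q + 1 = p * (p + 1) + (q ^ 2 + q + 1) by ring]
      exact (Dvd.intro _ rfl).add h2
    · rw [show p ^ 2 + q ^ 2 + p + q + 1 = q * (q + 1) + (p ^ 2 + p + 1) by ring]
      exact (Dvd.intro _ rfl).add h1
  obtain ⟨k, hk⟩ := hdvd
  have hk' : (p : ℤ) ^ 2 + q ^ 2 + p + q + 1 = k * p * q := by
    have : ((p ^ 2 + q ^ 2 + p + q + 1 : ℕ) : ℤ) = ((p * q * k : ℕ) : ℤ) := by rw [hk]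
    push_cast at this
    linear_combination this
  have h5 : (k : ℤ) = 5 := by
    rcases le_total p q with h | h
    · exact vieta_quotient_eq_five_of_le k p q hp.pos (by exact_mod_cast h) hk'
    · exact vieta_quotient_eq_five_of_le k q p hq.pos (by exact_mod_cast h)
        (by linear_combination hk')
  rw [hk', h5]

/-- The prime `3` at the end of a chain `3, q, r` forces `q = 13` and `r = 61`. -/
theorem sigma_chain_from_three {q r : ℕ} (hq : q.Prime) (hr : r.Prime) (hr3 : r ≠ 3)
    (h1 : q ∣ 3 ^ 2 + 3 + 1) (h3 : r ∣ q ^ 2 + q + 1) : q = 13 ∧ r = 61 := by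
  have hq13 : q = 13 := (Nat.prime_dvd_prime_iff_eq hq (by norm_num)).1 (by simpa using h1)
  subst hq13
  have h : r ∣ 3 * 61 := by simpa using h3
  rcases hr.dvd_mul.1 h with h | h
  · exact absurd ((Nat.prime_dvd_prime_iff_eq hr (by norm_num)).1 h) hr3
  · exact ⟨rfl, (Nat.prime_dvd_prime_iff_eq hr (by norm_num)).1 h⟩

/-- If `p + r + 1 = 5 q` and `p² + q² + p + q + 1 = 5 p q`, then `3` divides one of `p, q, r`. -/
theorem three_dvd_of_sigma_chain {p q r : ℤ} (h : p ^ 2 + q ^ 2 + p + q + 1 = 5 * p * q)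
    (hsum : p + r + 1 = 5 * q) : 3 ∣ p ∨ 3 ∣ q ∨ 3 ∣ r := by
  have key : ∀ x y z : ZMod 3, x ^ 2 + y ^ 2 + x + y + 1 = 5 * x * y → x + z + 1 = 5 * y →
      x = 0 ∨ y = 0 ∨ z = 0 := by decide
  have h' := congrArg (Int.cast : ℤ → ZMod 3) h
  have hsum' := congrArg (Int.cast : ℤ → ZMod 3) hsum
  push_cast at h' hsum'
  simpa only [ZMod.intCast_zmod_eq_zero_iff_dvd, Nat.cast_ofNat]
    using key p q r h' hsum'

/-- If p, q, r are distinct odd primes with (p, q) a σ_{2,2} pair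
and (q, r) a σ_{2,2} pair, then {p, q, r} = {3, 13, 61}. -/
theorem stmt_10 (p q r : ℕ) (hp : p.Prime) (hq : q.Prime) (hr : r.Prime)
    (hpodd : Odd p) (hqodd : Odd q) (hrodd : Odd r)
    (hpq : p ≠ q) (hqr : q ≠ r) (hpr : p ≠ r)
    (h1 : q ∣ p ^ 2 + p + 1) (h2 : p ∣ q ^ 2 + q + 1)
    (h3 : r ∣ q ^ 2 + q + 1) (h4 : q ∣ r ^ 2 + r + 1) :
    ({p, q, r} : Finset ℕ) = ({3, 13, 61} : Finset ℕ) := by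
  have hpq5 := sigma_pair_equation hp hq hpq h1 h2
  have hrq5 := sigma_pair_equation hr hq hqr.symm h4 h3
  have hne : (p : ℤ) - r ≠ 0 := sub_ne_zero.2 (by exact_mod_cast hpr)
  have hsum : (p : ℤ) + r + 1 = 5 * q :=
    mul_left_cancel₀ hne (by linear_combination hpq5 - hrq5)
  have three_eq : ∀ {s : ℕ}, s.Prime → (3 : ℤ) ∣ s → s = 3 := fun hs h =>
    ((Nat.prime_dvd_prime_iff_eq Nat.prime_three hs).1 (by exact_mod_cast h)).symm
  rcases three_dvd_of_sigma_chain hpq5 hsum with h | h | h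
  · obtain rfl := three_eq hp h
    obtain ⟨rfl, rfl⟩ := sigma_chain_from_three hq hr hpr.symm h1 h3
    rfl
  · obtain rfl := three_eq hq h
    have hp13 := (Nat.prime_dvd_prime_iff_eq hp (by norm_num : Nat.Prime 13)).1 (by simpa using h2)
    have hr13 := (Nat.prime_dvd_prime_iff_eq hr (by norm_num : Nat.Prime 13)).1 (by simpa using h3)
    exact absurd (hp13.trans hr13.symm) hpr
  · obtain rfl := three_eq hr h
    obtain ⟨rfl, rfl⟩ := sigma_chain_from_three hq hp hpr h4 h2
    decide
end

section
/- If p and q are odd primes with p dividing q + 1 and q dividing σ(p⁴) = p⁴ + p³ + p² + p + 1, then p² does not divide q + 1. -/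
/-- If p and q are odd primes with p ∣ q + 1 and
q ∣ σ(p⁴) = p⁴ + p³ + p² + p + 1, then p² ∤ q + 1. -/
theorem stmt_12 (p q : ℕ) (hp : p.Prime) (hq : q.Prime) (hpodd : Odd p) (hqodd : Odd q)
    (h1 : p ∣ q + 1) (h2 : q ∣ p ^ 4 + p ^ 3 + p ^ 2 + p + 1) :
    ¬ (p ^ 2 ∣ q + 1) := by
  rintro ⟨k, hk⟩
  obtain ⟨m, hm⟩ := h2
  have hp3 : 3 ≤ p := by
    have := hp.two_le
    obtain ⟨r, hr⟩ := hpodd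
    omega
  have hkeven : Even k := by
    have h : Even (p ^ 2 * k) := hk ▸ hqodd.add_one
    exact (Nat.even_mul.mp h).resolve_left (Nat.not_even_iff_odd.mpr hpodd.pow)
  have hk2 : 2 ≤ k := by
    obtain ⟨r, hr⟩ := hkeven
    have : k ≠ 0 := by
      rintro rfl
      omega
    omega
  zify at hk hm hp3 hk2
  obtain ⟨l, hl⟩ : ∃ l : ℤ, l = k * m - p ^ 2 - p - 1 := ⟨_, rfl⟩
  -- Reducing the factorization modulo `p ^ 2` determines the cofactor.
  have hml : (m : ℤ) + p + 1 = p ^ 2 * l := by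
    rw [hl]
    linear_combination (m : ℤ) * hk + hm
  have hl1 : 1 ≤ l := by
    have : 0 < (p : ℤ) ^ 2 * l := by rw [← hml]; positivity
    exact pos_of_mul_pos_right this (by positivity)
  have key : ((k : ℤ) * l - 1) * p ^ 2 = (k + 1) * p + (k + l + 1) := by
    have hpp : (p : ℤ) ^ 2 ≠ 0 := by positivity
    apply mul_left_cancel₀ hpp
    have hqk : (q : ℤ) = p ^ 2 * k - 1 := by linarith
    have hmm : (m : ℤ) = p ^ 2 * l - p - 1 := by linarith
    rw [hqk, hmm] at hm
    linear_combination -hm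
  obtain ⟨a, ha⟩ : ∃ a : ℤ, a = k - 2 := ⟨_, rfl⟩
  obtain ⟨b, hb⟩ : ∃ b : ℤ, b = l - 1 := ⟨_, rfl⟩
  have ha0 : 0 ≤ a := by linarith
  have hb0 : 0 ≤ b := by linarith
  have hsum : ((p : ℤ) ^ 2 - 3 * p - 4) + a * (p ^ 2 - p - 1) + b * (2 * p ^ 2 - 1)
      + a * b * p ^ 2 = 0 := by
    rw [ha, hb]
    linear_combination key
  have hab : 0 ≤ a * b := mul_nonneg ha0 hb0
  rcases hp3.eq_or_lt with h3 | h3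
  · rw [← h3] at hsum
    have ha1 : a < 1 := by linarith
    have hb1 : b < 1 := by linarith
    obtain rfl : a = 0 := by omega
    obtain rfl : b = 0 := by omega
    norm_num at hsum
  · have hp5 : (5 : ℤ) ≤ p := by
      obtain ⟨r, hr⟩ := hpodd
      omega
    have e1 : 0 < (p : ℤ) ^ 2 - 3 * p - 4 := by nlinarith
    have e2 : 0 ≤ a * ((p : ℤ) ^ 2 - p - 1) := mul_nonneg ha0 (by nlinarith)
    have e3 : 0 ≤ b * (2 * (p : ℤ) ^ 2 - 1) := mul_nonneg hb0 (by nlinarith)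
    have e4 : 0 ≤ a * b * (p : ℤ) ^ 2 := by positivity
    linarith
end
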